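/- arXiv:2208.09534 — 3 statements merged into one kernel-verified Lean document; each statement's English description precedes it below -/
import Mathlib

section
/- If g is the characteristic function of a random variable ξ whose density is bounded by M, then for every integer m ≥ 1, (1/2π) ∫_{-∞}^{∞} |g(t)|^{2m} dt ≤ M/√m. -/
open MeasureTheory ProbabilityTheory

/-!
By symmetrization `|g| ^ (2 * m)` is the characteristic function of a probability law `ν`, built
from `ξ` by `2 * m` convolutions. Convolving with a law of density at most `1 / (2 * b)` spreads
mass out at least as much as convolving with the uniform law on `[-b, b]`; this rearrangement
inequality comes from slicing a correlation along quantiles into functions bounded by `1`.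
Integrating `ν` against narrow Gaussians turns concentration at `0` into the integral of the
characteristic function, so that with `b = 1 / (2 * M)` the integral of `|g| ^ (2 * m)` is at most
that of `sinc (b * t) ^ (2 * m)`. What remains is Ball's inequality
`∫ sinc t ^ (2 * m) dt ≤ π / √m`, for which Euler's product gives `|sinc t| ≤ exp (-t ^ 2 / 6)`
on `[-π, π]`.
-/

open Filter Set
open scoped ENNReal NNReal Topology

section Quantile

variable {μ : Measure ℝ} [IsFiniteMeasure μ] {t x : ℝ}

variable (μ) in
/-- The quantile function of a finite measure, the generalized inverse of `x ↦ μ.real (Iic x)`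
on `(0, μ.real univ)`. It is set to `0` off that interval, which makes it measurable on `ℝ`. -/
noncomputable def quantile : ℝ → ℝ :=
  (Ioo 0 (μ.real univ)).indicator fun t => sInf {x | t ≤ μ.real (Iic x)}

lemma monotone_measureReal_Iic : Monotone fun x => μ.real (Iic x) :=
  fun _ _ hxy => measureReal_mono (Iic_subset_Iic.2 hxy)

lemma tendsto_measureReal_Iic_atTop : Tendsto (fun x => μ.real (Iic x)) atTop (𝓝 (μ.real univ)) :=
  (ENNReal.tendsto_toReal (measure_ne_top μ _)).comp (tendsto_measure_Iic_atTop μ)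

lemma tendsto_measureReal_Iic_atBot : Tendsto (fun x => μ.real (Iic x)) atBot (𝓝 0) := by
  have h := tendsto_measure_iInter_atBot (μ := μ) (s := fun x : ℝ => Iic x)
    (fun x => measurableSet_Iic.nullMeasurableSet) monotone_Iic ⟨0, measure_ne_top μ _⟩
  rw [iInter_Iic_eq_empty_iff.2 (by simp), measure_empty] at h
  exact (ENNReal.tendsto_toReal ENNReal.zero_ne_top).comp h

lemma continuousWithinAt_measureReal_Iic (a : ℝ) :
    ContinuousWithinAt (fun x => μ.real (Iic x)) (Ioi a) a := by
  have h := tendsto_measure_biInter_gt (μ := μ) (s := fun x : ℝ => Iic x) (a := a)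
    (fun x _ => measurableSet_Iic.nullMeasurableSet) (fun _ _ _ hij => Iic_subset_Iic.2 hij)
    ⟨a + 1, by simp, measure_ne_top μ _⟩
  have hIic : ⋂ r > a, Iic r = Iic a := by
    ext y
    simp [forall_gt_imp_ge_iff_le_of_dense]
  rw [hIic] at h
  exact (ENNReal.tendsto_toReal (measure_ne_top μ _)).comp h

lemma quantile_le_iff (ht : t ∈ Ioo 0 (μ.real univ)) :
    quantile μ t ≤ x ↔ t ≤ μ.real (Iic x) := by
  obtain ⟨x₀, hx₀⟩ := ((tendsto_measureReal_Iic_atBot (μ := μ)).eventually_lt_const ht.1).exists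
  obtain ⟨x₁, hx₁⟩ := ((tendsto_measureReal_Iic_atTop (μ := μ)).eventually_const_lt ht.2).exists
  have hbdd : BddBelow {x | t ≤ μ.real (Iic x)} :=
    ⟨x₀, fun x hx => ((monotone_measureReal_Iic (μ := μ)).reflect_lt (hx₀.trans_le hx)).le⟩
  have hmem : t ≤ μ.real (Iic (sInf {x | t ≤ μ.real (Iic x)})) := by
    refine ge_of_tendsto (continuousWithinAt_measureReal_Iic _)
      (eventually_nhdsWithin_of_forall fun y hy => ?_)
    obtain ⟨z, hz, hzy⟩ := exists_lt_of_csInf_lt ⟨x₁, hx₁.le⟩ hy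
    exact le_trans hz (monotone_measureReal_Iic hzy.le)
  rw [quantile, indicator_of_mem ht]
  exact ⟨fun h => hmem.trans (monotone_measureReal_Iic h), fun h => csInf_le hbdd h⟩

lemma monotoneOn_quantile : MonotoneOn (quantile μ) (Ioo 0 (μ.real univ)) :=
  fun _ hs _ ht hst => (quantile_le_iff hs).2 (hst.trans ((quantile_le_iff ht).1 le_rfl))

lemma measurable_quantile : Measurable (quantile μ) := by
  refine measurable_of_restrict_of_restrict_compl (s := Ioo 0 (μ.real univ)) measurableSet_Ioo ?_ ?_
  · exact Monotone.measurable fun s t hst => monotoneOn_quantile s.2 t.2 hst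
  · convert measurable_const (a := (0 : ℝ)) using 1
    funext t
    exact indicator_of_notMem t.2 fun s => sInf {x | s ≤ μ.real (Iic x)}

lemma map_quantile_volume :
    (volume.restrict (Ioo 0 (μ.real univ))).map (quantile μ) = μ := by
  refine Measure.ext_of_Iic _ _ fun x => ?_
  rw [Measure.map_apply measurable_quantile measurableSet_Iic,
    Measure.restrict_apply (measurable_quantile measurableSet_Iic)]
  have hle : μ.real (Iic x) ≤ μ.real univ := measureReal_mono (subset_univ _)
  have hset : quantile μ ⁻¹' Iic x ∩ Ioo 0 (μ.real univ) =
      Ioo 0 (μ.real univ) ∩ Iic (μ.real (Iic x)) := by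
    ext t
    rw [inter_comm]
    exact and_congr_right fun ht => quantile_le_iff ht
  have hae : (Ioo 0 (μ.real univ) ∩ Iic (μ.real (Iic x)) : Set ℝ) =ᵐ[volume]
      Ioc 0 (μ.real (Iic x)) := by
    rw [← min_eq_right hle, ← Ioc_inter_Iic, min_eq_right hle]
    exact Ioo_ae_eq_Ioc.inter (ae_eq_refl _)
  rw [hset, measure_congr hae, Real.volume_Ioc, sub_zero, ofReal_measureReal]

lemma measureReal_Iic_quantile [NullSingletonClass μ] (ht : t ∈ Ioo 0 (μ.real univ)) :
    μ.real (Iic (quantile μ t)) = t := by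
  refine le_antisymm ?_ ((quantile_le_iff ht).1 le_rfl)
  have hsub : quantile μ ⁻¹' Iio (quantile μ t) ∩ Ioo 0 (μ.real univ) ⊆ Ioo 0 t :=
    fun s hs => ⟨hs.2.1, monotoneOn_quantile.reflect_lt hs.2 ht hs.1⟩
  rw [← measureReal_congr (Iio_ae_eq_Iic (μ := μ))]
  refine ENNReal.toReal_le_of_le_ofReal ht.1.le ?_
  calc μ (Iio (quantile μ t))
      = volume (quantile μ ⁻¹' Iio (quantile μ t) ∩ Ioo 0 (μ.real univ)) := by
        rw [← Measure.restrict_apply (measurable_quantile measurableSet_Iio),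
          ← Measure.map_apply measurable_quantile measurableSet_Iio, map_quantile_volume]
    _ ≤ volume (Ioo 0 t) := measure_mono hsub
    _ = ENNReal.ofReal t := by rw [Real.volume_Ioo, sub_zero]

lemma measure_Ioi_quantile [NullSingletonClass μ] (ht : t ∈ Ioo 0 (μ.real univ)) :
    μ (Ioi (quantile μ t)) = ENNReal.ofReal (μ.real univ - t) := by
  rw [← compl_Iic, ← ofReal_measureReal, measureReal_compl measurableSet_Iic,
    measureReal_Iic_quantile ht]

lemma lintegral_mul_eq_lintegral_quantile {φ ψ : ℝ → ℝ≥0∞} (hμ : μ = volume.withDensity φ)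
    (hφ : Measurable φ) (hψ : Measurable ψ) :
    ∫⁻ x, φ x * ψ x = ∫⁻ t in Ioo 0 (μ.real univ), ψ (quantile μ t) := by
  calc ∫⁻ x, φ x * ψ x = ∫⁻ x, ψ x ∂μ := by
        rw [hμ, lintegral_withDensity_eq_lintegral_mul _ hφ hψ]
        rfl
    _ = ∫⁻ x, ψ x ∂(volume.restrict (Ioo 0 (μ.real univ))).map (quantile μ) := by
        rw [map_quantile_volume]
    _ = ∫⁻ t in Ioo 0 (μ.real univ), ψ (quantile μ t) := lintegral_map hψ measurable_quantile

end Quantile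

section Layer

variable {μ ν : Measure ℝ} {φ f : ℝ → ℝ≥0∞} {t z : ℝ}

/-- For measures `μ = φ dx` and `ν = f dx`, slices of the correlation `z ↦ ∫ φ (z + y) f y dy`:
with `a` and `b` the `t`-quantiles of `μ` and `ν`, the slice at level `t` consists of the
reflection of the part of `f` beyond `b`, glued at the point `a - b` to the part of `φ` beyond `a`.
-/
noncomputable def layer (μ ν : Measure ℝ) (φ f : ℝ → ℝ≥0∞) (t z : ℝ) : ℝ≥0∞ :=
  if z < quantile μ t - quantile ν t then f (quantile μ t - z) else φ (z + quantile ν t)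

lemma layer_le_one (hφ : ∀ x, φ x ≤ 1) (hf : ∀ x, f x ≤ 1) : layer μ ν φ f t z ≤ 1 := by
  unfold layer
  split_ifs
  exacts [hf _, hφ _]

variable [IsFiniteMeasure μ] [IsFiniteMeasure ν]

lemma measurable_uncurry_layer (hφ : Measurable φ) (hf : Measurable f) :
    Measurable (Function.uncurry (layer μ ν φ f)) := by
  have ha : Measurable fun p : ℝ × ℝ => quantile μ p.1 := measurable_quantile.comp measurable_fst
  have hb : Measurable fun p : ℝ × ℝ => quantile ν p.1 := measurable_quantile.comp measurable_fst
  exact Measurable.ite (measurableSet_lt measurable_snd (ha.sub hb))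
    (hf.comp (ha.sub measurable_snd)) (hφ.comp (measurable_snd.add hb))

lemma lintegral_layer [NullSingletonClass μ] [NullSingletonClass ν]
    (hμ : μ = volume.withDensity φ) (hν : ν = volume.withDensity f) (hf : Measurable f)
    (htμ : t ∈ Ioo 0 (μ.real univ)) (htν : t ∈ Ioo 0 (ν.real univ)) :
    ∫⁻ z, layer μ ν φ f t z = ENNReal.ofReal (μ.real univ + ν.real univ - 2 * t) := by
  have hlayer : ∀ z, layer μ ν φ f t z = (Ioi (quantile ν t)).indicator f (quantile μ t - z) +
      (Ici (quantile μ t)).indicator φ (z + quantile ν t) := by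
    intro z
    simp only [layer, indicator, mem_Ioi, mem_Ici, lt_sub_comm (a := quantile ν t),
      ← sub_le_iff_le_add]
    rcases lt_or_ge z (quantile μ t - quantile ν t) with hz | hz
    · rw [if_pos hz, if_pos hz, if_neg hz.not_ge, add_zero]
    · rw [if_neg hz.not_gt, if_neg hz.not_gt, if_pos hz, zero_add]
  have hmf : Measurable ((Ioi (quantile ν t)).indicator f) := hf.indicator measurableSet_Ioi
  calc ∫⁻ z, layer μ ν φ f t z
      = ν (Ioi (quantile ν t)) + μ (Ici (quantile μ t)) := by
        simp only [hlayer]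
        rw [lintegral_add_left (by fun_prop), lintegral_sub_left_eq_self,
          lintegral_add_right_eq_self, lintegral_indicator measurableSet_Ioi,
          lintegral_indicator measurableSet_Ici, ← withDensity_apply _ measurableSet_Ioi,
          ← withDensity_apply _ measurableSet_Ici, ← hμ, ← hν]
    _ = ENNReal.ofReal (ν.real univ - t) + ENNReal.ofReal (μ.real univ - t) := by
        rw [← measure_congr (Ioi_ae_eq_Ici (μ := μ)), measure_Ioi_quantile htν,
          measure_Ioi_quantile htμ]
    _ = ENNReal.ofReal (μ.real univ + ν.real univ - 2 * t) := by
        rw [← ENNReal.ofReal_add (sub_nonneg.2 htν.2.le) (sub_nonneg.2 htμ.2.le)]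
        congr 1
        ring

lemma measurableSet_measureReal_Iic_add_lt (z : ℝ) :
    MeasurableSet {y | μ.real (Iic (z + y)) < ν.real (Iic y)} :=
  measurableSet_lt (monotone_measureReal_Iic.measurable.comp (measurable_const_add z))
    monotone_measureReal_Iic.measurable

lemma measurableSet_lt_quantile_sub_quantile (z : ℝ) :
    MeasurableSet {t | z < quantile μ t - quantile ν t} :=
  measurableSet_lt measurable_const (measurable_quantile.sub measurable_quantile)

lemma setLIntegral_lt_le_lintegral_layer [NullSingletonClass μ] [NullSingletonClass ν]
    (hμ : μ = volume.withDensity φ) (hφ : Measurable φ) (hf : Measurable f) (z : ℝ) :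
    ∫⁻ y in {y | μ.real (Iic (z + y)) < ν.real (Iic y)}, φ (z + y) * f y ≤
      ∫⁻ t in Ioo 0 (min (μ.real univ) (ν.real univ)) ∩ {t | z < quantile μ t - quantile ν t},
        layer μ ν φ f t z := by
  set S : Set ℝ := {y | μ.real (Iic (z + y)) < ν.real (Iic y)}
  set T : Set ℝ := {t | z < quantile μ t - quantile ν t}
  have hS : MeasurableSet S := measurableSet_measureReal_Iic_add_lt z
  have hT : MeasurableSet T := measurableSet_lt_quantile_sub_quantile z
  have hfS : Measurable (S.indicator f) := hf.indicator hS
  have hle : ∀ t ∈ Ioo 0 (μ.real univ), S.indicator f (quantile μ t - z) ≤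
      (Ioo 0 (min (μ.real univ) (ν.real univ)) ∩ T).indicator (fun t => layer μ ν φ f t z) t := by
    intro t ht
    refine indicator_apply_le' (fun htS => ?_) fun _ => zero_le
    have hlt : t < ν.real (Iic (quantile μ t - z)) := by
      simpa only [S, mem_ofPred_eq, add_sub_cancel, measureReal_Iic_quantile ht] using htS
    have htν : t < ν.real univ := hlt.trans_le (measureReal_mono (subset_univ _))
    have htT : z < quantile μ t - quantile ν t := by
      rw [lt_sub_comm]
      refine (monotone_measureReal_Iic (μ := ν)).reflect_lt ?_
      rwa [measureReal_Iic_quantile ⟨ht.1, htν⟩]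
    have htmem : t ∈ Ioo 0 (min (μ.real univ) (ν.real univ)) ∩ T :=
      ⟨⟨ht.1, lt_min ht.2 htν⟩, htT⟩
    rw [indicator_of_mem htmem, layer, if_pos htT]
  calc ∫⁻ y in S, φ (z + y) * f y
      = ∫⁻ x, φ x * S.indicator f (x - z) := by
        rw [← lintegral_indicator hS, ← lintegral_sub_right_eq_self (μ := volume) _ z]
        simp only [indicator_mul_right, add_sub_cancel]
    _ = ∫⁻ t in Ioo 0 (μ.real univ), S.indicator f (quantile μ t - z) :=
        lintegral_mul_eq_lintegral_quantile hμ hφ (hfS.comp (measurable_sub_const z))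
    _ ≤ ∫⁻ t in Ioo 0 (min (μ.real univ) (ν.real univ)) ∩ T, layer μ ν φ f t z := by
        grw [setLIntegral_mono' measurableSet_Ioo hle, setLIntegral_le_lintegral,
          lintegral_indicator (measurableSet_Ioo.inter hT)]

lemma setLIntegral_compl_lt_le_lintegral_layer [NullSingletonClass ν]
    (hν : ν = volume.withDensity f) (hφ : Measurable φ) (hf : Measurable f) (z : ℝ) :
    ∫⁻ y in {y | μ.real (Iic (z + y)) < ν.real (Iic y)}ᶜ, φ (z + y) * f y ≤
      ∫⁻ t in Ioo 0 (min (μ.real univ) (ν.real univ)) \ {t | z < quantile μ t - quantile ν t},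
        layer μ ν φ f t z := by
  set S : Set ℝ := {y | μ.real (Iic (z + y)) < ν.real (Iic y)}
  set T : Set ℝ := {t | z < quantile μ t - quantile ν t}
  have hS : MeasurableSet S := measurableSet_measureReal_Iic_add_lt z
  have hT : MeasurableSet T := measurableSet_lt_quantile_sub_quantile z
  have hle : ∀ᵐ t, t ∈ Ioo 0 (ν.real univ) →
      Sᶜ.indicator (fun y => φ (z + y)) (quantile ν t) ≤
        (Ioo 0 (min (μ.real univ) (ν.real univ)) \ T).indicator (fun t => layer μ ν φ f t z) t := by
    filter_upwards [Measure.ae_ne (volume : Measure ℝ) (μ.real univ)] with t hne ht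
    refine indicator_apply_le' (fun htS => ?_) fun _ => zero_le
    have hle : t ≤ μ.real (Iic (z + quantile ν t)) := by
      simpa only [S, mem_compl_iff, mem_ofPred_eq, not_lt, measureReal_Iic_quantile ht] using htS
    have htμ : t < μ.real univ := (hle.trans (measureReal_mono (subset_univ _))).lt_of_ne hne
    have htT : ¬ z < quantile μ t - quantile ν t :=
      not_lt.2 (sub_le_iff_le_add.2 ((quantile_le_iff ⟨ht.1, htμ⟩).2 hle))
    have htmem : t ∈ Ioo 0 (min (μ.real univ) (ν.real univ)) \ T :=
      ⟨⟨ht.1, lt_min htμ ht.2⟩, htT⟩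
    rw [indicator_of_mem htmem, layer, if_neg htT]
  calc ∫⁻ y in Sᶜ, φ (z + y) * f y
      = ∫⁻ y, f y * Sᶜ.indicator (fun y => φ (z + y)) y := by
        rw [← lintegral_indicator hS.compl]
        simp only [mul_comm (φ _), indicator_mul_right]
    _ = ∫⁻ t in Ioo 0 (ν.real univ), Sᶜ.indicator (fun y => φ (z + y)) (quantile ν t) :=
        lintegral_mul_eq_lintegral_quantile hν hf
          ((hφ.comp (measurable_const_add z)).indicator hS.compl)
    _ ≤ ∫⁻ t in Ioo 0 (min (μ.real univ) (ν.real univ)) \ T, layer μ ν φ f t z := by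
        grw [setLIntegral_mono_ae' measurableSet_Ioo hle, setLIntegral_le_lintegral,
          lintegral_indicator (measurableSet_Ioo.diff hT)]

lemma lintegral_mul_comp_add_le_lintegral_layer [NullSingletonClass μ] [NullSingletonClass ν]
    (hμ : μ = volume.withDensity φ) (hν : ν = volume.withDensity f)
    (hφ : Measurable φ) (hf : Measurable f) (z : ℝ) :
    ∫⁻ y, φ (z + y) * f y ≤
      ∫⁻ t in Ioo 0 (min (μ.real univ) (ν.real univ)), layer μ ν φ f t z := by
  rw [← lintegral_add_compl _ (measurableSet_measureReal_Iic_add_lt (μ := μ) (ν := ν) z),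
    ← lintegral_inter_add_sdiff (layer μ ν φ f · z) _
      (measurableSet_lt_quantile_sub_quantile (μ := μ) (ν := ν) z)]
  exact add_le_add (setLIntegral_lt_le_lintegral_layer (ν := ν) hμ hφ hf z)
    (setLIntegral_compl_lt_le_lintegral_layer (μ := μ) hν hφ hf z)

end Layer

section LessConcentrated

variable {ν κ μ : Measure ℝ} {b r : ℝ}

/-- `ν` is less concentrated than `κ`: among the functions `φ : ℝ → [0, 1]` of integral `2 * r`,
none has a `ν`-integral exceeding the `κ`-mass of the centred interval of length `2 * r`. -/
def LessConcentrated (ν κ : Measure ℝ) : Prop :=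
  ∀ φ : ℝ → ℝ≥0∞, Measurable φ → (∀ x, φ x ≤ 1) → ∀ r : ℝ, 0 ≤ r →
    ∫⁻ x, φ x = ENNReal.ofReal (2 * r) → ∫⁻ x, φ x ∂ν ≤ κ (Icc (-r) r)

lemma lessConcentrated_dirac_zero (ν : Measure ℝ) [IsProbabilityMeasure ν] :
    LessConcentrated ν (Measure.dirac 0) := by
  intro φ _ hφ r hr _
  calc ∫⁻ x, φ x ∂ν ≤ ∫⁻ _, 1 ∂ν := lintegral_mono hφ
    _ = Measure.dirac 0 (Icc (-r) r) := by simp [hr]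

lemma exists_measurable_le_one_withDensity_eq [SigmaFinite μ] (hμ : μ ≤ volume) :
    ∃ f : ℝ → ℝ≥0∞, Measurable f ∧ (∀ x, f x ≤ 1) ∧ μ = volume.withDensity f := by
  refine ⟨fun x => min (μ.rnDeriv volume x) 1, (μ.measurable_rnDeriv volume).min measurable_const,
    fun x => min_le_right _ _, ?_⟩
  rw [← Measure.withDensity_rnDeriv_eq μ volume hμ.absolutelyContinuous]
  refine withDensity_congr_ae ?_
  filter_upwards [Measure.rnDeriv_le_one_of_le hμ] with x hx
  rw [Measure.withDensity_rnDeriv_eq μ volume hμ.absolutelyContinuous]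
  exact (min_eq_left hx).symm

lemma volume_Ioo_inter_abs_le_sub (b r z : ℝ) :
    volume (Ioo 0 (min (2 * r) (2 * b)) ∩ {t | |z| ≤ r + b - t}) =
      volume (Icc (-b) b ∩ Icc (-r - z) (r - z)) := by
  have hae : (Ioo 0 (min (2 * r) (2 * b)) ∩ {t | |z| ≤ r + b - t} : Set ℝ) =ᵐ[volume]
      Ioc 0 (min (min (2 * r) (2 * b)) (r + b - |z|)) := by
    have hIic : {t : ℝ | |z| ≤ r + b - t} = Iic (r + b - |z|) := by
      ext t
      simp only [mem_ofPred_eq, mem_Iic, le_sub_comm]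
    rw [hIic, ← Ioc_inter_Iic]
    exact Ioo_ae_eq_Ioc.inter (ae_eq_refl _)
  rw [measure_congr hae, Icc_inter_Icc, Real.volume_Ioc, Real.volume_Icc]
  congr 1
  grind

lemma lintegral_measure_Icc_eq_lintegral_volume (κ : Measure ℝ) [SFinite κ] (b r : ℝ) :
    ∫⁻ t in Ioo 0 (min (2 * r) (2 * b)), κ (Icc (-(r + b - t)) (r + b - t)) =
      ∫⁻ z, volume (Icc (-b) b ∩ Icc (-r - z) (r - z)) ∂κ := by
  have hS : MeasurableSet {p : ℝ × ℝ | |p.2| ≤ r + b - p.1} :=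
    measurableSet_le (by fun_prop) (by fun_prop)
  calc ∫⁻ t in Ioo 0 (min (2 * r) (2 * b)), κ (Icc (-(r + b - t)) (r + b - t))
      = (volume.restrict (Ioo 0 (min (2 * r) (2 * b)))).prod κ
          {p : ℝ × ℝ | |p.2| ≤ r + b - p.1} := by
        rw [Measure.prod_apply hS]
        refine lintegral_congr fun t => congrArg κ (ext fun z => ?_)
        exact abs_le.symm
    _ = ∫⁻ z, volume (Icc (-b) b ∩ Icc (-r - z) (r - z)) ∂κ := by
        rw [Measure.prod_apply_symm hS]
        refine lintegral_congr fun z => ?_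
        rw [Measure.restrict_apply (measurable_prodMk_right hS), inter_comm]
        exact volume_Ioo_inter_abs_le_sub b r z

lemma conv_cond_Icc_apply_Icc (κ : Measure ℝ) (hb : 0 < b) (r : ℝ) :
    (κ ∗ volume[|Icc (-b) b]) (Icc (-r) r) =
      (ENNReal.ofReal (2 * b))⁻¹ * ∫⁻ z, volume (Icc (-b) b ∩ Icc (-r - z) (r - z)) ∂κ := by
  have hmeas : Measurable ((Icc (-r) r).indicator (1 : ℝ → ℝ≥0∞)) :=
    measurable_one.indicator measurableSet_Icc
  have hmass : volume (Icc (-b) b) = ENNReal.ofReal (2 * b) := by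
    rw [Real.volume_Icc]; congr 1; ring
  have hslice (z : ℝ) : ∫⁻ y, (Icc (-r) r).indicator 1 (z + y) ∂volume[|Icc (-b) b] =
      (ENNReal.ofReal (2 * b))⁻¹ * volume (Icc (-b) b ∩ Icc (-r - z) (r - z)) := by
    have hpre : (fun y => (Icc (-r) r).indicator (1 : ℝ → ℝ≥0∞) (z + y)) =
        (Icc (-r - z) (r - z)).indicator 1 := by
      rw [← preimage_const_add_Icc]
      rfl
    rw [hpre, lintegral_indicator_one measurableSet_Icc, cond_apply measurableSet_Icc, hmass]
  rw [← lintegral_indicator_one measurableSet_Icc, Measure.lintegral_conv hmeas]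
  simp only [hslice]
  exact lintegral_const_mul' _ _ (by simpa using hb)

lemma LessConcentrated.lintegral_lintegral_mul_le [SFinite ν] (h : LessConcentrated ν κ)
    {φ f : ℝ → ℝ≥0∞} (hφ : Measurable φ) (hf : Measurable f) (hφ_le : ∀ x, φ x ≤ 1)
    (hf_le : ∀ x, f x ≤ 1) (hr : 0 ≤ r) (hb : 0 ≤ b) (hφ_int : ∫⁻ x, φ x = ENNReal.ofReal (2 * r))
    (hf_int : ∫⁻ x, f x = ENNReal.ofReal (2 * b)) :
    ∫⁻ z, (∫⁻ y, φ (z + y) * f y) ∂ν ≤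
      ∫⁻ t in Ioo 0 (min (2 * r) (2 * b)), κ (Icc (-(r + b - t)) (r + b - t)) := by
  have := isFiniteMeasure_withDensity (hφ_int.trans_ne ENNReal.ofReal_ne_top)
  have := isFiniteMeasure_withDensity (hf_int.trans_ne ENNReal.ofReal_ne_top)
  have hmassφ : (volume.withDensity φ).real univ = 2 * r := by
    rw [measureReal_def, withDensity_apply _ .univ, setLIntegral_univ, hφ_int,
      ENNReal.toReal_ofReal (by positivity)]
  have hmassf : (volume.withDensity f).real univ = 2 * b := by
    rw [measureReal_def, withDensity_apply _ .univ, setLIntegral_univ, hf_int,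
      ENNReal.toReal_ofReal (by positivity)]
  set L := layer (volume.withDensity φ) (volume.withDensity f) φ f
  have hL : Measurable (Function.uncurry L) := measurable_uncurry_layer hφ hf
  calc ∫⁻ z, (∫⁻ y, φ (z + y) * f y) ∂ν
      ≤ ∫⁻ z, (∫⁻ t in Ioo 0 (min (2 * r) (2 * b)), L t z) ∂ν := by
        refine lintegral_mono fun z => ?_
        simpa only [hmassφ, hmassf] using
          lintegral_mul_comp_add_le_lintegral_layer rfl rfl hφ hf z
    _ = ∫⁻ t in Ioo 0 (min (2 * r) (2 * b)), ∫⁻ z, L t z ∂ν := by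
        rw [lintegral_lintegral_swap (f := fun z t => L t z) (hL.comp measurable_swap).aemeasurable]
    _ ≤ ∫⁻ t in Ioo 0 (min (2 * r) (2 * b)), κ (Icc (-(r + b - t)) (r + b - t)) := by
        refine setLIntegral_mono' measurableSet_Ioo fun t ht => ?_
        have htr : t < 2 * r := ht.2.trans_le (min_le_left _ _)
        have htb : t < 2 * b := ht.2.trans_le (min_le_right _ _)
        refine h (L t) (hL.comp measurable_prodMk_left) (fun z => layer_le_one hφ_le hf_le)
          (r + b - t) (by linarith) ?_
        rw [lintegral_layer rfl rfl hf (by rw [hmassφ]; exact ⟨ht.1, htr⟩)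
          (by rw [hmassf]; exact ⟨ht.1, htb⟩), hmassφ, hmassf]
        congr 1
        ring

lemma LessConcentrated.conv_cond_Icc [SFinite ν] [SFinite κ] [IsProbabilityMeasure μ]
    (h : LessConcentrated ν κ) (hb : 0 < b) (hμ : ENNReal.ofReal (2 * b) • μ ≤ volume) :
    LessConcentrated (ν ∗ μ) (κ ∗ volume[|Icc (-b) b]) := by
  intro φ hφ hφ_le r hr hφ_int
  have := μ.smul_finite (c := ENNReal.ofReal (2 * b)) ENNReal.ofReal_ne_top
  obtain ⟨f, hf, hf_le, hμf⟩ := exists_measurable_le_one_withDensity_eq hμ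
  have hb_pos : 0 < ENNReal.ofReal (2 * b) := ENNReal.ofReal_pos.2 (by positivity)
  have hf_int : ∫⁻ x, f x = ENNReal.ofReal (2 * b) := by
    rw [← setLIntegral_univ, ← withDensity_apply _ .univ, ← hμf]
    simp
  have hslice (z : ℝ) :
      ∫⁻ y, φ (z + y) ∂μ = (ENNReal.ofReal (2 * b))⁻¹ * ∫⁻ y, φ (z + y) * f y := by
    have hmul : ENNReal.ofReal (2 * b) * ∫⁻ y, φ (z + y) ∂μ = ∫⁻ y, φ (z + y) * f y := by
      rw [← smul_eq_mul, ← lintegral_smul_measure, hμf,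
        lintegral_withDensity_eq_lintegral_mul _ hf (by fun_prop)]
      simp only [Pi.mul_apply, mul_comm]
    rw [← hmul, ENNReal.inv_mul_cancel_left hb_pos.ne' ENNReal.ofReal_ne_top]
  calc ∫⁻ x, φ x ∂(ν ∗ μ)
      = (ENNReal.ofReal (2 * b))⁻¹ * ∫⁻ z, (∫⁻ y, φ (z + y) * f y) ∂ν := by
        rw [Measure.lintegral_conv hφ]
        simp only [hslice]
        exact lintegral_const_mul _ (Measurable.lintegral_prod_right (by fun_prop))
    _ ≤ (ENNReal.ofReal (2 * b))⁻¹ *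
          ∫⁻ z, volume (Icc (-b) b ∩ Icc (-r - z) (r - z)) ∂κ := by
        rw [← lintegral_measure_Icc_eq_lintegral_volume]
        exact mul_le_mul_right (h.lintegral_lintegral_mul_le hφ hf hφ_le hf_le hr hb.le hφ_int
          hf_int) _
    _ = (κ ∗ volume[|Icc (-b) b]) (Icc (-r) r) := (conv_cond_Icc_apply_Icc κ hb r).symm

end LessConcentrated

lemma LessConcentrated.measure_Icc_le {ν κ : Measure ℝ} (h : LessConcentrated ν κ) (r : ℝ) :
    ν (Icc (-r) r) ≤ κ (Icc (-r) r) := by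
  rcases le_or_gt 0 r with hr | hr
  · have hind : ∀ x, (Icc (-r) r).indicator (1 : ℝ → ℝ≥0∞) x ≤ 1 :=
      fun x => indicator_apply_le' (fun _ => le_rfl) fun _ => zero_le
    rw [← lintegral_indicator_one measurableSet_Icc]
    refine h _ (measurable_one.indicator measurableSet_Icc) hind r hr ?_
    rw [lintegral_indicator_one measurableSet_Icc, Real.volume_Icc]
    congr 1
    ring
  · simp [Icc_eq_empty (show ¬ -r ≤ r by linarith)]

lemma exists_setOf_le_exp_neg_mul_sq_eq_Icc {c t : ℝ} (hc : 0 < c) (ht : 0 < t) :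
    ∃ r, {x | t ≤ Real.exp (-c * x ^ 2)} = Icc (-r) r := by
  have hiff (x : ℝ) : t ≤ Real.exp (-c * x ^ 2) ↔ x ^ 2 ≤ -Real.log t / c := by
    rw [← Real.log_le_iff_le_exp ht, le_div_iff₀ hc]
    constructor <;> intro h <;> linarith
  rcases le_or_gt t 1 with ht1 | ht1
  · have hlog : 0 ≤ -Real.log t / c :=
      div_nonneg (neg_nonneg.2 (Real.log_nonpos ht.le ht1)) hc.le
    exact ⟨√(-Real.log t / c), ext fun x => (hiff x).trans (Real.sq_le hlog)⟩
  · have hlog : -Real.log t / c < 0 := div_neg_of_neg_of_pos (neg_neg_of_pos (Real.log_pos ht1)) hc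
    refine ⟨-1, ext fun x => (hiff x).trans ?_⟩
    simp only [mem_Icc]
    constructor <;> intro h <;> nlinarith [sq_nonneg x]

lemma LessConcentrated.lintegral_exp_neg_mul_sq_le {ν κ : Measure ℝ} (h : LessConcentrated ν κ)
    {c : ℝ} (hc : 0 < c) :
    ∫⁻ x, ENNReal.ofReal (Real.exp (-c * x ^ 2)) ∂ν ≤
      ∫⁻ x, ENNReal.ofReal (Real.exp (-c * x ^ 2)) ∂κ := by
  have hmeas : Measurable fun x : ℝ => Real.exp (-c * x ^ 2) := by fun_prop
  have hpos (ρ : Measure ℝ) : 0 ≤ᵐ[ρ] fun x : ℝ => Real.exp (-c * x ^ 2) :=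
    ae_of_all _ fun x => (Real.exp_pos _).le
  rw [lintegral_eq_lintegral_meas_le _ (hpos ν) hmeas.aemeasurable,
    lintegral_eq_lintegral_meas_le _ (hpos κ) hmeas.aemeasurable]
  refine setLIntegral_mono' measurableSet_Ioi fun t ht => ?_
  obtain ⟨r, hr⟩ := exists_setOf_le_exp_neg_mul_sq_eq_Icc hc ht
  rw [hr]
  exact h.measure_Icc_le r

lemma integral_charFun_comm {E : Type*} [NormedAddCommGroup E] [InnerProductSpace ℝ E]
    [MeasurableSpace E] [BorelSpace E] [SecondCountableTopology E] (μ ν : Measure E)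
    [IsFiniteMeasure μ] [IsFiniteMeasure ν] :
    ∫ t, charFun μ t ∂ν = ∫ x, charFun ν x ∂μ := by
  simp only [charFun_apply]
  rw [integral_integral_swap]
  · simp only [real_inner_comm]
  · refine Integrable.of_bound (C := 1) (Continuous.aestronglyMeasurable ?_)
      (ae_of_all _ fun p => ?_)
    · unfold Function.uncurry
      fun_prop
    · exact (Complex.norm_exp_ofReal_mul_I _).le

section GaussianRegularization

variable {ν κ : Measure ℝ} [IsProbabilityMeasure ν] [IsProbabilityMeasure κ]

lemma lintegral_charFun_gaussianReal (hν : ∀ t, charFun ν t = ‖charFun ν t‖) (v : ℝ≥0) :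
    ∫⁻ t, ‖charFun ν t‖ₑ ∂gaussianReal 0 v =
      ∫⁻ x, ENNReal.ofReal (Real.exp (-(v / 2) * x ^ 2)) ∂ν := by
  have hγ (x : ℝ) : charFun (gaussianReal 0 v) x = (Real.exp (-(v / 2) * x ^ 2) : ℂ) := by
    rw [charFun_gaussianReal]
    push_cast
    ring_nf
  have hint : ∫ t, ‖charFun ν t‖ ∂gaussianReal 0 v = ∫ x, Real.exp (-(v / 2) * x ^ 2) ∂ν := by
    have hcomm := integral_charFun_comm ν (gaussianReal 0 v)
    simp only [hγ] at hcomm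
    rw [integral_congr_ae (ae_of_all _ hν)] at hcomm
    rw [integral_complex_ofReal, integral_complex_ofReal] at hcomm
    exact_mod_cast hcomm
  have hexp (x : ℝ) : ‖Real.exp (-(v / 2) * x ^ 2)‖ ≤ 1 := by
    rw [Real.norm_of_nonneg (Real.exp_pos _).le, Real.exp_le_one_iff]
    nlinarith [v.2, sq_nonneg x]
  rw [← ofReal_integral_norm_eq_lintegral_enorm, hint, ofReal_integral_eq_lintegral_ofReal]
  · exact Integrable.of_bound (by fun_prop) (C := 1) (ae_of_all _ hexp)
  · exact ae_of_all _ fun x => (Real.exp_pos _).le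
  · exact Integrable.of_bound measurable_charFun.aestronglyMeasurable (C := 1)
      (ae_of_all _ norm_charFun_le_one)

lemma lintegral_charFun_mul_exp (hν : ∀ t, charFun ν t = ‖charFun ν t‖) {v : ℝ≥0} (hv : v ≠ 0) :
    ∫⁻ t, ENNReal.ofReal (Real.exp (-t ^ 2 / (2 * v))) * ‖charFun ν t‖ₑ =
      ENNReal.ofReal √(2 * Real.pi * v) *
        ∫⁻ x, ENNReal.ofReal (Real.exp (-(v / 2) * x ^ 2)) ∂ν := by
  have : (0 : ℝ) < v := NNReal.coe_pos.2 (pos_iff_ne_zero.2 hv)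
  have hpdf (t : ℝ) : ENNReal.ofReal (Real.exp (-t ^ 2 / (2 * v))) =
      ENNReal.ofReal √(2 * Real.pi * v) * gaussianPDF 0 v t := by
    rw [gaussianPDF, gaussianPDFReal, sub_zero, ← ENNReal.ofReal_mul (Real.sqrt_nonneg _),
      mul_inv_cancel_left₀ (Real.sqrt_pos.2 (by positivity)).ne']
  rw [← lintegral_charFun_gaussianReal hν, gaussianReal_of_var_ne_zero 0 hv,
    lintegral_withDensity_eq_lintegral_mul _ (measurable_gaussianPDF 0 v) (by fun_prop),
    ← lintegral_const_mul' _ _ ENNReal.ofReal_ne_top]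
  simp only [hpdf, mul_assoc, Pi.mul_apply]

lemma tendsto_lintegral_exp_neg_mul_sq (hν : ∀ t, charFun ν t = ‖charFun ν t‖) :
    Tendsto (fun n : ℕ => ENNReal.ofReal √(2 * Real.pi * (n + 1)) *
      ∫⁻ x, ENNReal.ofReal (Real.exp (-((n + 1) / 2) * x ^ 2)) ∂ν) atTop
      (𝓝 (∫⁻ t, ‖charFun ν t‖ₑ)) := by
  have hrw (n : ℕ) : ENNReal.ofReal √(2 * Real.pi * (n + 1)) *
      ∫⁻ x, ENNReal.ofReal (Real.exp (-((n + 1) / 2) * x ^ 2)) ∂ν =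
      ∫⁻ t, ENNReal.ofReal (Real.exp (-t ^ 2 / (2 * (n + 1)))) * ‖charFun ν t‖ₑ := by
    simpa using (lintegral_charFun_mul_exp hν (v := n + 1) (by positivity)).symm
  simp only [hrw]
  refine lintegral_tendsto_of_tendsto_of_monotone (fun n => by fun_prop)
    (ae_of_all _ fun t m n hmn => ?_) (ae_of_all _ fun t => ?_)
  · simp only [neg_div]
    gcongr
  · have hlim : Tendsto (fun n : ℕ => Real.exp (-t ^ 2 / (2 * (n + 1)))) atTop (𝓝 1) := by
      rw [← Real.exp_zero]
      refine (Real.continuous_exp.tendsto 0).comp (Tendsto.const_div_atTop ?_ _)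
      exact (tendsto_natCast_atTop_atTop.atTop_add tendsto_const_nhds).const_mul_atTop two_pos
    simpa using ENNReal.Tendsto.mul_const (ENNReal.tendsto_ofReal hlim) (Or.inl (by simp))

lemma LessConcentrated.lintegral_charFun_le (h : LessConcentrated ν κ)
    (hν : ∀ t, charFun ν t = ‖charFun ν t‖) (hκ : ∀ t, charFun κ t = ‖charFun κ t‖) :
    ∫⁻ t, ‖charFun ν t‖ₑ ≤ ∫⁻ t, ‖charFun κ t‖ₑ := by
  refine le_of_tendsto_of_tendsto' (tendsto_lintegral_exp_neg_mul_sq hν)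
    (tendsto_lintegral_exp_neg_mul_sq hκ) fun n => ?_
  gcongr ENNReal.ofReal _ * ?_
  exact h.lintegral_exp_neg_mul_sq_le (c := ((n : ℝ) + 1) / 2) (by positivity)

lemma lintegral_charFun_le_of_le_smul_volume (hν : ∀ t, charFun ν t = ‖charFun ν t‖)
    {c : ℝ} (hνc : ν ≤ ENNReal.ofReal c • volume) :
    ∫⁻ t, ‖charFun ν t‖ₑ ≤ ENNReal.ofReal (2 * Real.pi * c) := by
  refine le_of_tendsto' (tendsto_lintegral_exp_neg_mul_sq hν) fun n => ?_
  have hgauss : ∫⁻ x, ENNReal.ofReal (Real.exp (-((n + 1) / 2) * x ^ 2)) =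
      ENNReal.ofReal √(Real.pi / ((n + 1) / 2)) := by
    rw [← ofReal_integral_eq_lintegral_ofReal (integrable_exp_neg_mul_sq (by positivity))
      (ae_of_all _ fun x => (Real.exp_pos _).le), integral_gaussian]
  have hsqrt : √(2 * Real.pi * (n + 1)) * √(Real.pi / ((n + 1) / 2)) = 2 * Real.pi := by
    rw [← Real.sqrt_mul (by positivity),
      Real.sqrt_eq_iff_mul_self_eq (by positivity) (by positivity)]
    field_simp
  grw [lintegral_mono' hνc le_rfl, lintegral_smul_measure, hgauss, smul_eq_mul, mul_left_comm,
    ← ENNReal.ofReal_mul (Real.sqrt_nonneg _), hsqrt, mul_comm,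
    ← ENNReal.ofReal_mul (by positivity)]

end GaussianRegularization

section Symmetrization

variable {G : Type*} [AddGroup G] [MeasurableSpace G]

/-- The law of `X - Y` for independent `X` and `Y` with law `μ`. -/
noncomputable def symmetrization (μ : Measure G) : Measure G := μ ∗ μ.map Neg.neg

instance isProbabilityMeasure_map_neg [MeasurableNeg G] (μ : Measure G) [IsProbabilityMeasure μ] :
    IsProbabilityMeasure (μ.map Neg.neg) :=
  Measure.isProbabilityMeasure_map measurable_neg.aemeasurable

instance isProbabilityMeasure_symmetrization [MeasurableAdd₂ G] [MeasurableNeg G] (μ : Measure G)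
    [IsProbabilityMeasure μ] : IsProbabilityMeasure (symmetrization μ) :=
  Measure.probabilitymeasure_of_probabilitymeasures_conv _ _

lemma smul_map_neg_le [MeasurableNeg G] {μ ρ : Measure G} [ρ.IsNegInvariant] {c : ℝ≥0∞}
    (hμ : c • μ ≤ ρ) : c • μ.map Neg.neg ≤ ρ := by
  rw [← Measure.map_smul, ← Measure.map_neg_eq_self ρ]
  exact Measure.map_mono hμ measurable_neg

lemma charFun_symmetrization {E : Type*} [NormedAddCommGroup E] [InnerProductSpace ℝ E]
    [MeasurableSpace E] [BorelSpace E] [SecondCountableTopology E] (μ : Measure E)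
    [IsFiniteMeasure μ] (t : E) :
    charFun (symmetrization μ) t = (‖charFun μ t‖ ^ 2 : ℝ) := by
  have hneg : charFun (μ.map Neg.neg) t = charFun μ (-t) := by
    simp only [charFun_apply]
    rw [integral_map (by fun_prop) (by fun_prop)]
    simp only [inner_neg_left, inner_neg_right]
  rw [symmetrization, charFun_conv, hneg, charFun_neg, Complex.mul_conj, Complex.normSq_eq_norm_sq]

end Symmetrization

section ConvPow

variable {M : Type*} [AddMonoid M] [MeasurableSpace M]

/-- The `n`-fold convolution power of `μ`: the law of a sum of `n` independent variables
with law `μ`. -/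
noncomputable def convPow (μ : Measure M) : ℕ → Measure M
  | 0 => Measure.dirac 0
  | n + 1 => convPow μ n ∗ μ

instance isProbabilityMeasure_convPow [MeasurableAdd₂ M] (μ : Measure M) [IsProbabilityMeasure μ]
    (n : ℕ) : IsProbabilityMeasure (convPow μ n) := by
  induction n with
  | zero => exact Measure.dirac.isProbabilityMeasure
  | succ n _ => exact Measure.probabilitymeasure_of_probabilitymeasures_conv _ _

lemma charFun_convPow {E : Type*} [NormedAddCommGroup E] [InnerProductSpace ℝ E]
    [MeasurableSpace E] [BorelSpace E] [SecondCountableTopology E] (μ : Measure E)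
    [IsProbabilityMeasure μ] (n : ℕ) (t : E) : charFun (convPow μ n) t = charFun μ t ^ n := by
  induction n with
  | zero => simp [convPow]
  | succ n ih => rw [convPow, charFun_conv, ih, pow_succ]

end ConvPow

section Uniform

lemma isProbabilityMeasure_cond_Icc {b : ℝ} (hb : 0 < b) :
    IsProbabilityMeasure (volume[|Icc (-b) b] : Measure ℝ) :=
  cond_isProbabilityMeasure_of_finite (by simp [hb]) (by simp)

lemma cond_Icc_eq_smul_restrict (b : ℝ) :
    (volume[|Icc (-b) b] : Measure ℝ) =
      (ENNReal.ofReal (2 * b))⁻¹ • volume.restrict (Icc (-b) b) := by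
  rw [ProbabilityTheory.cond, Real.volume_Icc, sub_neg_eq_add, ← two_mul]

lemma cond_Icc_le_smul_volume {b : ℝ} (hb : 0 < b) :
    (volume[|Icc (-b) b] : Measure ℝ) ≤ ENNReal.ofReal (2 * b)⁻¹ • volume := by
  rw [cond_Icc_eq_smul_restrict, ENNReal.ofReal_inv_of_pos (by positivity)]
  gcongr
  exact Measure.restrict_le_self

lemma map_neg_cond_Icc (b : ℝ) :
    (volume[|Icc (-b) b] : Measure ℝ).map Neg.neg = volume[|Icc (-b) b] := by
  have hpre : Neg.neg ⁻¹' Icc (-b) b = Icc (-b) b := by simp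
  rw [cond_Icc_eq_smul_restrict, Measure.map_smul]
  nth_rw 1 [← hpre]
  rw [← Measure.restrict_map measurable_neg measurableSet_Icc, Measure.map_neg_eq_self]

lemma charFun_cond_Icc {b : ℝ} (hb : 0 < b) (t : ℝ) :
    charFun (volume[|Icc (-b) b]) t = Real.sinc (b * t) := by
  have hint : ∫ x in (-b)..b, Complex.exp (t * x * Complex.I) = 2 * b * Real.sinc (b * t) := by
    have hdirac := integral_charFun_Icc (μ := Measure.dirac t) hb
    simpa [mul_comm] using hdirac
  rw [charFun_apply_real, cond_Icc_eq_smul_restrict, integral_smul_measure,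
    integral_Icc_eq_integral_Ioc, ← intervalIntegral.integral_of_le (by linarith), hint,
    ENNReal.toReal_inv, ENNReal.toReal_ofReal (by positivity), Complex.real_smul]
  have hb0 : (b : ℂ) ≠ 0 := Complex.ofReal_ne_zero.2 hb.ne'
  push_cast
  field_simp

lemma LessConcentrated.convPow_symmetrization {μ : Measure ℝ} [IsProbabilityMeasure μ] {b : ℝ}
    (hb : 0 < b) (hμ : ENNReal.ofReal (2 * b) • μ ≤ volume) (n : ℕ) :
    LessConcentrated (convPow (symmetrization μ) n)
      (convPow (symmetrization (volume[|Icc (-b) b])) n) := by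
  have := isProbabilityMeasure_cond_Icc hb
  induction n with
  | zero => exact lessConcentrated_dirac_zero _
  | succ n ih =>
    have hsucc (ρ : Measure ℝ) [IsProbabilityMeasure ρ] [SFinite (ρ.map Neg.neg)] :
        convPow (symmetrization ρ) (n + 1) =
          (convPow (symmetrization ρ) n ∗ ρ) ∗ ρ.map Neg.neg :=
      (Measure.conv_assoc _ _ _).symm
    rw [hsucc, hsucc, map_neg_cond_Icc]
    exact (ih.conv_cond_Icc hb hμ).conv_cond_Icc hb (smul_map_neg_le hμ)

lemma lintegral_norm_charFun_pow_le_lintegral_sinc_pow {μ : Measure ℝ} [IsProbabilityMeasure μ]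
    {b : ℝ} (hb : 0 < b) (hμ : ENNReal.ofReal (2 * b) • μ ≤ volume) (n : ℕ) :
    ∫⁻ t, ENNReal.ofReal (‖charFun μ t‖ ^ (2 * n)) ≤
      ∫⁻ t, ENNReal.ofReal (Real.sinc (b * t) ^ (2 * n)) := by
  have := isProbabilityMeasure_cond_Icc hb
  have hchar (ρ : Measure ℝ) [IsProbabilityMeasure ρ] (t : ℝ) :
      charFun (convPow (symmetrization ρ) n) t = (‖charFun ρ t‖ ^ (2 * n) : ℝ) := by
    rw [charFun_convPow, charFun_symmetrization, ← Complex.ofReal_pow, ← pow_mul]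
  have hnorm (ρ : Measure ℝ) [IsProbabilityMeasure ρ] (t : ℝ) :
      ‖charFun (convPow (symmetrization ρ) n) t‖ = ‖charFun ρ t‖ ^ (2 * n) := by
    rw [hchar, Complex.norm_of_nonneg (by positivity)]
  have h := (LessConcentrated.convPow_symmetrization hb hμ n).lintegral_charFun_le
    (fun t => by rw [hnorm, hchar]) (fun t => by rw [hnorm, hchar])
  simpa only [← ofReal_norm, hnorm, charFun_cond_Icc hb, Complex.norm_real, Real.norm_eq_abs,
    (even_two_mul n).pow_abs] using h

end Uniform

section SecondMoment

lemma conv_le_of_le {G : Type*} [AddCommGroup G] [MeasurableSpace G] [MeasurableAdd₂ G]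
    {μ ν ρ : Measure G} [SFinite μ] [IsProbabilityMeasure ν] [ρ.IsAddLeftInvariant] (hμ : μ ≤ ρ) :
    μ ∗ ν ≤ ρ := by
  refine Measure.le_iff.2 fun s hs => ?_
  have hshift (x : G) : ∫⁻ y, s.indicator 1 (x + y) ∂μ ≤ ρ s := by
    calc ∫⁻ y, s.indicator 1 (x + y) ∂μ
        ≤ ∫⁻ y, s.indicator 1 (x + y) ∂ρ := lintegral_mono' hμ le_rfl
      _ = ρ s := by rw [lintegral_add_left_eq_self, lintegral_indicator_one hs]
  rw [Measure.conv_comm, ← lintegral_indicator_one hs,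
    Measure.lintegral_conv (measurable_one.indicator hs)]
  exact (lintegral_mono hshift).trans_eq (by simp)

lemma lintegral_norm_charFun_sq_le {μ : Measure ℝ} [IsProbabilityMeasure μ] {c : ℝ}
    (hμ : μ ≤ ENNReal.ofReal c • volume) :
    ∫⁻ t, ENNReal.ofReal (‖charFun μ t‖ ^ 2) ≤ ENNReal.ofReal (2 * Real.pi * c) := by
  have hnorm (t : ℝ) : ‖charFun (symmetrization μ) t‖ = ‖charFun μ t‖ ^ 2 := by
    rw [charFun_symmetrization, Complex.norm_of_nonneg (by positivity)]
  have h := lintegral_charFun_le_of_le_smul_volume (ν := symmetrization μ)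
    (fun t => by rw [hnorm, charFun_symmetrization]) (conv_le_of_le hμ)
  simpa only [← ofReal_norm, hnorm] using h

end SecondMoment

section Sinc

lemma tendsto_prod_one_sub_div_sq_sinc (x : ℝ) :
    Tendsto (fun n => ∏ j ∈ Finset.range n, (1 - x ^ 2 / ((j : ℝ) + 1) ^ 2)) atTop
      (𝓝 (Real.sinc (Real.pi * x))) := by
  rcases eq_or_ne x 0 with rfl | hx
  · simp
  · have hpx : Real.pi * x ≠ 0 := mul_ne_zero Real.pi_ne_zero hx
    rw [Real.sinc_of_ne_zero hpx]
    simpa only [mul_div_cancel_left₀ _ hpx] using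
      (Real.tendsto_euler_sin_prod x).div_const (Real.pi * x)

lemma abs_sinc_le_exp_neg_sq_div_six {t : ℝ} (ht : |t| ≤ Real.pi) :
    |Real.sinc t| ≤ Real.exp (-(t ^ 2 / 6)) := by
  set x := t / Real.pi with hx
  have hsq : x ^ 2 ≤ 1 := by
    rw [sq_le_one_iff_abs_le_one, hx, abs_div, abs_of_pos Real.pi_pos]
    exact (div_le_one Real.pi_pos).2 ht
  have hprod := (tendsto_prod_one_sub_div_sq_sinc x).abs
  have hsum : Tendsto (fun n => Real.exp (-(x ^ 2 * ∑ j ∈ Finset.range n, 1 / ((j : ℝ) + 1) ^ 2)))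
      atTop (𝓝 (Real.exp (-(x ^ 2 * (Real.pi ^ 2 / 6))))) := by
    have hzeta := ((hasSum_nat_add_iff' 1).2 hasSum_zeta_two).tendsto_sum_nat
    refine (Real.continuous_exp.tendsto _).comp (Tendsto.const_mul _ ?_).neg
    simpa using hzeta
  have htx : Real.pi * x = t := mul_div_cancel₀ t Real.pi_ne_zero
  have hexp : x ^ 2 * (Real.pi ^ 2 / 6) = t ^ 2 / 6 := by rw [← htx]; ring
  rw [htx] at hprod
  rw [hexp] at hsum
  refine le_of_tendsto_of_tendsto' hprod hsum fun n => ?_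
  rw [Finset.abs_prod, Finset.mul_sum, ← Finset.sum_neg_distrib, Real.exp_sum]
  refine Finset.prod_le_prod (fun j _ => abs_nonneg _) fun j _ => ?_
  have hfactor : x ^ 2 / ((j : ℝ) + 1) ^ 2 ≤ 1 :=
    div_le_one_of_le₀ (hsq.trans (one_le_pow₀ (by simp))) (by positivity)
  rw [abs_of_nonneg (sub_nonneg.2 hfactor), mul_one_div]
  exact Real.one_sub_le_exp_neg _

lemma abs_sinc_le_inv_abs {t : ℝ} (ht : t ≠ 0) : |Real.sinc t| ≤ |t|⁻¹ := by
  rw [Real.sinc_of_ne_zero ht, abs_div, div_eq_mul_inv]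
  exact mul_le_of_le_one_left (by positivity) (Real.abs_sin_le_one t)

lemma lintegral_sinc_sq_le : ∫⁻ t, ENNReal.ofReal (Real.sinc t ^ 2) ≤ ENNReal.ofReal Real.pi := by
  have := isProbabilityMeasure_cond_Icc one_pos
  have h := lintegral_norm_charFun_sq_le (cond_Icc_le_smul_volume one_pos)
  have hpi : 2 * Real.pi * (2 * 1)⁻¹ = Real.pi := by ring
  simpa only [charFun_cond_Icc one_pos, one_mul, Complex.norm_real, Real.norm_eq_abs, sq_abs,
    hpi] using h

lemma lintegral_comp_abs (f : ℝ → ℝ≥0∞) : ∫⁻ x, f |x| = 2 * ∫⁻ x in Ioi 0, f x := by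
  have hpos : ∫⁻ x in Ioi 0, f |x| = ∫⁻ x in Ioi 0, f x :=
    setLIntegral_congr_fun measurableSet_Ioi fun x hx => by rw [abs_of_pos hx]
  have hneg : ∫⁻ x in Iic 0, f |x| = ∫⁻ x in Ioi 0, f |x| := by
    rw [setLIntegral_congr Iio_ae_eq_Iic.symm]
    have h := (Measure.measurePreserving_neg (volume : Measure ℝ)).setLIntegral_comp_preimage_emb
      (MeasurableEquiv.neg ℝ).measurableEmbedding (fun x => f |x|) (Ioi 0)
    simpa using h
  rw [← lintegral_add_compl _ measurableSet_Ioi, compl_Ioi, hneg, hpos, two_mul]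

lemma lintegral_Ioi_exp_neg_mul_sq {c : ℝ} (hc : 0 < c) :
    ∫⁻ t in Ioi 0, ENNReal.ofReal (Real.exp (-c * t ^ 2)) =
      ENNReal.ofReal (√(Real.pi / c) / 2) := by
  rw [← integral_gaussian_Ioi, ofReal_integral_eq_lintegral_ofReal]
  · exact (integrable_exp_neg_mul_sq hc).integrableOn
  · exact ae_of_all _ fun t => (Real.exp_pos _).le

lemma lintegral_Ioi_rpow_of_lt {a c : ℝ} (ha : a < -1) (hc : 0 < c) :
    ∫⁻ t in Ioi c, ENNReal.ofReal (t ^ a) = ENNReal.ofReal (-c ^ (a + 1) / (a + 1)) := by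
  rw [← integral_Ioi_rpow_of_lt ha hc, ofReal_integral_eq_lintegral_ofReal]
  · exact integrableOn_Ioi_rpow_of_lt ha hc
  · exact ae_restrict_of_forall_mem measurableSet_Ioi fun t ht =>
      Real.rpow_nonneg (hc.trans ht).le _

lemma lintegral_Ioc_sinc_pow_le {m : ℕ} (hm : 1 ≤ m) :
    ∫⁻ t in Ioc 0 Real.pi, ENNReal.ofReal (|Real.sinc t| ^ (2 * m)) ≤
      ENNReal.ofReal (√(3 * Real.pi / m) / 2) := by
  have hexp (t : ℝ) : Real.exp (-(m / 3) * t ^ 2) = Real.exp (-(t ^ 2 / 6)) ^ (2 * m) := by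
    rw [← Real.exp_nat_mul]
    push_cast
    ring_nf
  calc ∫⁻ t in Ioc 0 Real.pi, ENNReal.ofReal (|Real.sinc t| ^ (2 * m))
      ≤ ∫⁻ t in Ioc 0 Real.pi, ENNReal.ofReal (Real.exp (-(m / 3) * t ^ 2)) := by
        refine setLIntegral_mono' measurableSet_Ioc fun t ht => ?_
        rw [hexp]
        gcongr
        exact abs_sinc_le_exp_neg_sq_div_six ((abs_of_pos ht.1).trans_le ht.2)
    _ ≤ ∫⁻ t in Ioi 0, ENNReal.ofReal (Real.exp (-(m / 3) * t ^ 2)) :=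
        lintegral_mono_set Ioc_subset_Ioi_self
    _ = ENNReal.ofReal (√(3 * Real.pi / m) / 2) := by
        rw [lintegral_Ioi_exp_neg_mul_sq (by positivity), div_div_eq_mul_div, mul_comm Real.pi]

lemma lintegral_Ioi_sinc_pow_le {m : ℕ} (hm : 1 ≤ m) :
    ∫⁻ t in Ioi Real.pi, ENNReal.ofReal (|Real.sinc t| ^ (2 * m)) ≤
      ENNReal.ofReal (Real.pi / ((2 * m - 1) * Real.pi ^ (2 * m))) := by
  have hm1 : (1 : ℝ) ≤ m := by exact_mod_cast hm
  calc ∫⁻ t in Ioi Real.pi, ENNReal.ofReal (|Real.sinc t| ^ (2 * m))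
      ≤ ∫⁻ t in Ioi Real.pi, ENNReal.ofReal (t ^ (-(2 * m : ℕ) : ℝ)) := by
        refine setLIntegral_mono' measurableSet_Ioi fun t ht => ?_
        have ht0 : 0 < t := Real.pi_pos.trans ht
        rw [Real.rpow_neg ht0.le, Real.rpow_natCast, ← inv_pow]
        gcongr
        simpa only [abs_of_pos ht0] using abs_sinc_le_inv_abs ht0.ne'
    _ = ENNReal.ofReal (Real.pi / ((2 * m - 1) * Real.pi ^ (2 * m))) := by
        have hlt : (-(2 * m : ℕ) : ℝ) < -1 := by
          push_cast
          linarith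
        have hden : (-(2 * m : ℕ) : ℝ) + 1 = -(2 * m - 1) := by
          push_cast
          ring
        rw [lintegral_Ioi_rpow_of_lt hlt Real.pi_pos, Real.rpow_add_one Real.pi_ne_zero,
          Real.rpow_neg Real.pi_pos.le, Real.rpow_natCast, hden, neg_div_neg_eq]
        congr 1
        field_simp

lemma lintegral_sinc_pow_le {m : ℕ} (hm : 1 ≤ m) :
    ∫⁻ t, ENNReal.ofReal (Real.sinc t ^ (2 * m)) ≤
      ENNReal.ofReal (√(3 * Real.pi / m) + 2 * (Real.pi / ((2 * m - 1) * Real.pi ^ (2 * m)))) := by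
  have hm1 : (1 : ℝ) ≤ m := by exact_mod_cast hm
  have heven (t : ℝ) : Real.sinc t ^ (2 * m) = |Real.sinc (|t|)| ^ (2 * m) := by
    rw [(even_two_mul m).pow_abs]
    rcases abs_choice t with h | h <;> simp only [h, Real.sinc_neg]
  calc ∫⁻ t, ENNReal.ofReal (Real.sinc t ^ (2 * m))
      = 2 * ∫⁻ t in Ioc 0 Real.pi ∪ Ioi Real.pi, ENNReal.ofReal (|Real.sinc t| ^ (2 * m)) := by
        simp only [heven]
        rw [Ioc_union_Ioi_eq_Ioi Real.pi_pos.le, ← lintegral_comp_abs]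
    _ ≤ 2 * (ENNReal.ofReal (√(3 * Real.pi / m) / 2) +
          ENNReal.ofReal (Real.pi / ((2 * m - 1) * Real.pi ^ (2 * m)))) := by
        grw [lintegral_union_le, lintegral_Ioc_sinc_pow_le hm, lintegral_Ioi_sinc_pow_le hm]
    _ = _ := by
        have hden : 0 < (2 * m - 1 : ℝ) := by linarith
        rw [← ENNReal.ofReal_add (by positivity) (by positivity), ← ENNReal.ofReal_ofNat 2,
          ← ENNReal.ofReal_mul zero_le_two, mul_add, mul_div_cancel₀ _ two_ne_zero]

lemma sqrt_add_tail_le_pi_div_sqrt {m : ℕ} (hm : 2 ≤ m) :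
    √(3 * Real.pi / m) + 2 * (Real.pi / ((2 * m - 1) * Real.pi ^ (2 * m))) ≤ Real.pi / √m := by
  have hm2 : (2 : ℝ) ≤ m := by exact_mod_cast hm
  have : 0 < √(m : ℝ) := Real.sqrt_pos.2 (by linarith)
  have hsqrt : √(3 * Real.pi / m) ≤ 0.978 * Real.pi / √m := by
    rw [Real.sqrt_le_left (by positivity), div_pow, Real.sq_sqrt (by positivity)]
    gcongr
    nlinarith [Real.pi_gt_d4]
  have hpow : (9.8 : ℝ) ^ 2 ≤ Real.pi ^ (2 * m) := by
    have hsq : (9.8 : ℝ) ≤ Real.pi ^ 2 := by nlinarith [Real.pi_gt_d4]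
    rw [pow_mul]
    calc (9.8 : ℝ) ^ 2 ≤ 9.8 ^ m := pow_le_pow_right₀ (by norm_num) hm
      _ ≤ (Real.pi ^ 2) ^ m := by gcongr
  have hlin : √(m : ℝ) ≤ 2 * m - 1 := by
    rw [Real.sqrt_le_left (by linarith)]
    nlinarith
  have htail : Real.pi / ((2 * m - 1) * Real.pi ^ (2 * m)) ≤ 0.011 * Real.pi / √m := by
    calc Real.pi / ((2 * m - 1) * Real.pi ^ (2 * m)) ≤ Real.pi / (√m * 9.8 ^ 2) := by
          gcongr
          linarith
      _ = (9.8 ^ 2)⁻¹ * Real.pi / √m := by field_simp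
      _ ≤ 0.011 * Real.pi / √m := by gcongr; norm_num
  calc √(3 * Real.pi / m) + 2 * (Real.pi / ((2 * m - 1) * Real.pi ^ (2 * m)))
      ≤ 0.978 * Real.pi / √m + 2 * (0.011 * Real.pi / √m) := by gcongr
    _ = Real.pi / √m := by ring

lemma lintegral_sinc_pow_le_pi_div_sqrt {m : ℕ} (hm : 1 ≤ m) :
    ∫⁻ t, ENNReal.ofReal (Real.sinc t ^ (2 * m)) ≤ ENNReal.ofReal (Real.pi / √m) := by
  obtain rfl | hm2 := hm.eq_or_lt
  · -- The Gaussian bound on `sinc` is too weak here: `π - √(3π)` leaves no room for the tails.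
    simpa using lintegral_sinc_sq_le
  · exact (lintegral_sinc_pow_le hm).trans
      (ENNReal.ofReal_le_ofReal (sqrt_add_tail_le_pi_div_sqrt hm2))

end Sinc

section BoundedDensity

lemma lintegral_comp_mul_left_of_pos {f : ℝ → ℝ≥0∞} (hf : Measurable f) {b : ℝ} (hb : 0 < b) :
    ∫⁻ t, f (b * t) = ENNReal.ofReal b⁻¹ * ∫⁻ t, f t := by
  rw [← lintegral_map hf (measurable_const_mul b), Real.map_volume_mul_left hb.ne',
    lintegral_smul_measure, abs_of_pos (inv_pos.2 hb), smul_eq_mul]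

lemma pos_of_le_ofReal_smul {α : Type*} [MeasurableSpace α] {μ ν : Measure α} [NeZero μ] {M : ℝ}
    (hμ : μ ≤ ENNReal.ofReal M • ν) : 0 < M := by
  by_contra! hM
  rw [ENNReal.ofReal_of_nonpos hM, zero_smul] at hμ
  exact NeZero.ne μ (le_antisymm hμ (Measure.zero_le μ))

lemma lintegral_norm_charFun_pow_le_of_le_smul_volume {μ : Measure ℝ} [IsProbabilityMeasure μ]
    {M : ℝ} (hμ : μ ≤ ENNReal.ofReal M • volume) {m : ℕ} (hm : 1 ≤ m) :
    ∫⁻ t, ENNReal.ofReal (‖charFun μ t‖ ^ (2 * m)) ≤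
      ENNReal.ofReal (2 * Real.pi * (M / √m)) := by
  have hM : 0 < M := pos_of_le_ofReal_smul hμ
  have hb : 0 < (2 * M)⁻¹ := by positivity
  have hbμ : ENNReal.ofReal (2 * (2 * M)⁻¹) • μ ≤ volume := by
    have hinv : 2 * (2 * M)⁻¹ * M = 1 := by field_simp
    grw [hμ]
    rw [smul_smul, ← ENNReal.ofReal_mul (by positivity), hinv, ENNReal.ofReal_one, one_smul]
  calc ∫⁻ t, ENNReal.ofReal (‖charFun μ t‖ ^ (2 * m))
      ≤ ∫⁻ t, ENNReal.ofReal (Real.sinc ((2 * M)⁻¹ * t) ^ (2 * m)) :=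
        lintegral_norm_charFun_pow_le_lintegral_sinc_pow hb hbμ m
    _ = ENNReal.ofReal (2 * M) * ∫⁻ t, ENNReal.ofReal (Real.sinc t ^ (2 * m)) := by
        rw [lintegral_comp_mul_left_of_pos (f := fun t => ENNReal.ofReal (Real.sinc t ^ (2 * m)))
          (by fun_prop) hb, inv_inv]
    _ ≤ ENNReal.ofReal (2 * M) * ENNReal.ofReal (Real.pi / √m) := by
        grw [lintegral_sinc_pow_le_pi_div_sqrt hm]
    _ = ENNReal.ofReal (2 * Real.pi * (M / √m)) := by
        rw [← ENNReal.ofReal_mul (by positivity)]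
        congr 1
        ring

lemma withDensity_ofReal_le_smul {α : Type*} [MeasurableSpace α] {μ : Measure α} {q : α → ℝ} {M : ℝ}
    (hq : ∀ x, q x ≤ M) :
    μ.withDensity (fun x => ENNReal.ofReal (q x)) ≤ ENNReal.ofReal M • μ := by
  rw [← withDensity_const]
  exact withDensity_mono (ae_of_all _ fun x => ENNReal.ofReal_le_ofReal (hq x))

lemma charFun_map_eq_integral_exp {Ω : Type*} [MeasurableSpace Ω] {P : Measure Ω} {ξ : Ω → ℝ}
    (hξ : AEMeasurable ξ P) (t : ℝ) :
    charFun (P.map ξ) t = ∫ ω, Complex.exp (Complex.I * t * ξ ω) ∂P := by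
  rw [charFun_apply_real, integral_map hξ (by fun_prop)]
  simp only [mul_comm Complex.I, mul_right_comm _ Complex.I]

end BoundedDensity

/-- If `g` is the characteristic function of a random variable `ξ` whose density is bounded
by `M`, then for every integer `m ≥ 1`, `(1/2π) ∫ |g(t)|^{2m} dt ≤ M/√m`. -/
theorem stmt_4 {Ω : Type*} [MeasurableSpace Ω] {P : Measure Ω} [IsProbabilityMeasure P]
    (ξ : Ω → ℝ) (q : ℝ → ℝ) (M : ℝ)
    (hmeas : Measurable ξ)
    (hdens : Measure.map ξ P =
      (volume : Measure ℝ).withDensity (fun x => ENNReal.ofReal (q x)))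
    (hqM : ∀ x, q x ≤ M)
    (g : ℝ → ℂ)
    (hg : ∀ t : ℝ, g t = ∫ ω, Complex.exp (Complex.I * t * ξ ω) ∂P)
    (m : ℕ) (hm : 1 ≤ m) :
    ∫⁻ t : ℝ, ENNReal.ofReal (‖g t‖ ^ (2 * m)) ≤
      ENNReal.ofReal (2 * Real.pi * (M / Real.sqrt m)) := by
  have : IsProbabilityMeasure (P.map ξ) := Measure.isProbabilityMeasure_map hmeas.aemeasurable
  have hbound : P.map ξ ≤ ENNReal.ofReal M • volume :=
    hdens.trans_le (withDensity_ofReal_le_smul hqM)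
  have hchar (t : ℝ) : g t = charFun (P.map ξ) t :=
    (hg t).trans (charFun_map_eq_integral_exp hmeas.aemeasurable t).symm
  simpa only [hchar] using lintegral_norm_charFun_pow_le_of_le_smul_volume hbound hm
end

section
/- Let X satisfy E X = 0, E X² = 1, and E e^{α|X|} ≤ 2 (α > 0). Then its characteristic function f(z) = E e^{izX} satisfies |f(z)| ≤ e^{−t²/5} for all complex z = t + iy with |t| ≤ α³/8 and |y| ≤ |t|/2. -/
open MeasureTheory ProbabilityTheory

/-! For `0 ≤ c ≤ 1` the tail of order `n` of the exponential series at `c * r` is at most `c ^ n`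
times its tail at `r`. Integrating this with `c = ‖w‖ / a` and `r = a |X|` bounds the error of the
Taylor polynomial of `w ↦ E e^{wX}` by `(‖w‖ / a) ^ n` times the Taylor remainder of `E e^{a|X|}`.
For a standardized `X` and `n = 3` the polynomial at `iz` is `1 - z² / 2`, whose modulus is about
`1 - 3t² / 8` in the worst case `|y| = |t| / 2`, while the error is at most `7t² / 40` because
`|t| ≤ α³ / 8`. As `3/8 - 7/40` is exactly `1/5`, nothing is left for the terms of order `t⁴`; they
are absorbed by the summand `-α² / 2` in the Taylor remainder of `E e^{α|X|}`. -/

open scoped Nat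

section ExponentialSeries

lemma hasSum_exp_sub_sum_range (x : ℝ) (n : ℕ) :
    HasSum (fun k ↦ x ^ (k + n) / (k + n)!) (Real.exp x - ∑ k ∈ Finset.range n, x ^ k / k !) := by
  have h : HasSum (fun k ↦ x ^ k / k !) (Real.exp x) := by
    rw [Real.exp_eq_exp_ℝ]
    exact NormedSpace.expSeries_div_hasSum_exp x
  exact (hasSum_nat_add_iff' n).2 h

lemma exp_mul_sub_sum_range_le {c r : ℝ} (hc₀ : 0 ≤ c) (hc₁ : c ≤ 1) (hr : 0 ≤ r) (n : ℕ) :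
    Real.exp (c * r) - ∑ k ∈ Finset.range n, (c * r) ^ k / k ! ≤
      c ^ n * (Real.exp r - ∑ k ∈ Finset.range n, r ^ k / k !) := by
  refine hasSum_le (fun k ↦ ?_) (hasSum_exp_sub_sum_range (c * r) n)
    ((hasSum_exp_sub_sum_range r n).mul_left (c ^ n))
  rw [mul_pow, mul_div_assoc]
  have hck : c ^ (k + n) ≤ c ^ n := pow_le_pow_of_le_one hc₀ hc₁ (Nat.le_add_left n k)
  gcongr

lemma norm_cexp_mul_ofReal_sub_sum_range_le {a : ℝ} {w : ℂ} (ha : 0 < a) (hw : ‖w‖ ≤ a) (x : ℝ)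
    (n : ℕ) :
    ‖Complex.exp (w * x) - ∑ k ∈ Finset.range n, (w * x) ^ k / (k ! : ℂ)‖ ≤
      (‖w‖ / a) ^ n * (Real.exp (a * |x|) - ∑ k ∈ Finset.range n, (a * |x|) ^ k / k !) := by
  have hnorm : ‖w * x‖ = ‖w‖ / a * (a * |x|) := by
    rw [norm_mul, Complex.norm_real, Real.norm_eq_abs]
    field_simp
  refine (Complex.norm_exp_sub_sum_le_exp_norm_sub_sum (w * x) n).trans ?_
  rw [hnorm]
  exact exp_mul_sub_sum_range_le (by positivity) ((div_le_one ha).2 hw) (by positivity) n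

end ExponentialSeries

section ComplexMGF

variable {Ω : Type*} {mΩ : MeasurableSpace Ω} {μ : Measure Ω} {X : Ω → ℝ} {a : ℝ}

lemma integrable_pow_of_integrable_exp_mul_abs (hX : AEMeasurable X μ) (ha : 0 < a)
    (hexp : Integrable (fun ω ↦ Real.exp (a * |X ω|)) μ) (k : ℕ) :
    Integrable (fun ω ↦ X ω ^ k) μ := by
  refine (hexp.const_mul (k ! / a ^ k)).mono' (hX.pow_const k).aestronglyMeasurable
    (.of_forall fun ω ↦ ?_)
  have hterm : (a * |X ω|) ^ k / k ! ≤ Real.exp (a * |X ω|) :=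
    Real.pow_div_factorial_le_exp _ (by positivity) k
  calc ‖X ω ^ k‖ = k ! / a ^ k * ((a * |X ω|) ^ k / k !) := by
        rw [norm_pow, Real.norm_eq_abs, mul_pow]
        field_simp
    _ ≤ k ! / a ^ k * Real.exp (a * |X ω|) := by gcongr

lemma integrable_cexp_mul_of_integrable_exp_mul_abs {w : ℂ} (hX : AEMeasurable X μ)
    (hw : ‖w‖ ≤ a) (hexp : Integrable (fun ω ↦ Real.exp (a * |X ω|)) μ) :
    Integrable (fun ω ↦ Complex.exp (w * X ω)) μ := by
  refine hexp.mono' (by fun_prop) (.of_forall fun ω ↦ ?_)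
  calc ‖Complex.exp (w * X ω)‖ ≤ Real.exp ‖w * X ω‖ := Complex.norm_exp_le_exp_norm _
    _ = Real.exp (‖w‖ * |X ω|) := by rw [norm_mul, Complex.norm_real, Real.norm_eq_abs]
    _ ≤ Real.exp (a * |X ω|) := by gcongr

theorem norm_complexMGF_sub_sum_range_le {w : ℂ} (hX : AEMeasurable X μ) (ha : 0 < a)
    (hw : ‖w‖ ≤ a) (hexp : Integrable (fun ω ↦ Real.exp (a * |X ω|)) μ) (n : ℕ) :
    ‖complexMGF X μ w - ∑ k ∈ Finset.range n, w ^ k / k ! * ((∫ ω, X ω ^ k ∂μ : ℝ) : ℂ)‖ ≤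
      (‖w‖ / a) ^ n * (∫ ω, Real.exp (a * |X ω|) ∂μ -
        ∑ k ∈ Finset.range n, a ^ k / k ! * ∫ ω, |X ω| ^ k ∂μ) := by
  have hpow := integrable_pow_of_integrable_exp_mul_abs hX ha hexp
  have hterm (k : ℕ) : Integrable (fun ω ↦ w ^ k / k ! * ((X ω ^ k : ℝ) : ℂ)) μ :=
    (hpow k).ofReal.const_mul _
  have habs (k : ℕ) : Integrable (fun ω ↦ a ^ k / k ! * |X ω| ^ k) μ := by
    simpa only [abs_pow] using (hpow k).abs.const_mul (a ^ k / k !)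
  have hleft : complexMGF X μ w - ∑ k ∈ Finset.range n, w ^ k / k ! * ((∫ ω, X ω ^ k ∂μ : ℝ) : ℂ) =
      ∫ ω, (Complex.exp (w * X ω) -
        ∑ k ∈ Finset.range n, w ^ k / k ! * ((X ω ^ k : ℝ) : ℂ)) ∂μ := by
    rw [integral_sub (integrable_cexp_mul_of_integrable_exp_mul_abs hX hw hexp)
        (integrable_finsetSum _ fun k _ ↦ hterm k),
      integral_finsetSum _ fun k _ ↦ hterm k]
    simp only [integral_const_mul, integral_complex_ofReal, complexMGF]
  have hright : ∫ ω, Real.exp (a * |X ω|) ∂μ -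
        ∑ k ∈ Finset.range n, a ^ k / k ! * ∫ ω, |X ω| ^ k ∂μ =
      ∫ ω, (Real.exp (a * |X ω|) - ∑ k ∈ Finset.range n, a ^ k / k ! * |X ω| ^ k) ∂μ := by
    rw [integral_sub hexp (integrable_finsetSum _ fun k _ ↦ habs k),
      integral_finsetSum _ fun k _ ↦ habs k]
    simp only [integral_const_mul]
  rw [hleft, hright, ← integral_const_mul]
  refine norm_integral_le_of_norm_le
    ((hexp.sub (integrable_finsetSum _ fun k _ ↦ habs k)).const_mul _) (.of_forall fun ω ↦ ?_)
  simpa only [mul_pow, mul_div_right_comm, Complex.ofReal_pow] using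
    norm_cexp_mul_ofReal_sub_sum_range_le ha hw (X ω) n

theorem norm_complexMGF_sub_one_add_sq_div_two_le [IsProbabilityMeasure μ] {w : ℂ}
    (hX : AEMeasurable X μ) (ha : 0 < a) (hw : ‖w‖ ≤ a)
    (hexp : Integrable (fun ω ↦ Real.exp (a * |X ω|)) μ)
    (hmean : ∫ ω, X ω ∂μ = 0) (hvar : ∫ ω, X ω ^ 2 ∂μ = 1) :
    ‖complexMGF X μ w - (1 + w ^ 2 / 2)‖ ≤
      (‖w‖ / a) ^ 3 * (∫ ω, Real.exp (a * |X ω|) ∂μ - (1 + a ^ 2 / 2)) := by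
  have htaylor := norm_complexMGF_sub_sum_range_le hX ha hw hexp 3
  simp only [Finset.sum_range_succ, Finset.sum_range_zero, pow_zero, pow_one, Nat.factorial_zero,
    Nat.factorial_one, Nat.factorial_two, Nat.cast_one, Nat.cast_ofNat, div_one, zero_add, sq_abs,
    integral_const, probReal_univ, smul_eq_mul, mul_one, hmean, hvar, Complex.ofReal_one,
    Complex.ofReal_zero, mul_zero, add_zero] at htaylor
  have habs : 0 ≤ a * ∫ ω, |X ω| ∂μ := by positivity
  refine htaylor.trans ?_
  gcongr
  linarith

theorem one_add_sq_div_two_le_integral_exp_mul_abs [IsProbabilityMeasure μ]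
    (hX : AEMeasurable X μ) (ha : 0 < a)
    (hexp : Integrable (fun ω ↦ Real.exp (a * |X ω|)) μ)
    (hmean : ∫ ω, X ω ∂μ = 0) (hvar : ∫ ω, X ω ^ 2 ∂μ = 1) :
    1 + a ^ 2 / 2 ≤ ∫ ω, Real.exp (a * |X ω|) ∂μ := by
  have hnorm : ‖(a : ℂ)‖ = a := by rw [Complex.norm_real, Real.norm_of_nonneg ha.le]
  have h := (norm_nonneg _).trans
    (norm_complexMGF_sub_one_add_sq_div_two_le hX ha hnorm.le hexp hmean hvar)
  rw [hnorm, div_self ha.ne', one_pow, one_mul] at h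
  linarith

end ComplexMGF

section Complex

lemma norm_one_add_le_one_add_re_add_norm_sq_div_two (w : ℂ) :
    ‖1 + w‖ ≤ 1 + w.re + ‖w‖ ^ 2 / 2 := by
  have hsq : ‖1 + w‖ ^ 2 = 1 + 2 * w.re + ‖w‖ ^ 2 := by
    simp only [Complex.sq_norm, Complex.normSq_apply, Complex.add_re, Complex.add_im,
      Complex.one_re, Complex.one_im]
    ring
  linarith [two_mul_le_add_sq ‖1 + w‖ 1]

variable {z : ℂ}

lemma im_sq_le_of_abs_im_le (hz : |z.im| ≤ |z.re| / 2) : z.im ^ 2 ≤ z.re ^ 2 / 4 := by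
  have h := pow_le_pow_left₀ (abs_nonneg z.im) hz 2
  rw [div_pow, sq_abs, sq_abs] at h
  linarith

lemma norm_sq_le_of_abs_im_le (hz : |z.im| ≤ |z.re| / 2) : ‖z‖ ^ 2 ≤ 5 / 4 * z.re ^ 2 := by
  rw [Complex.sq_norm, Complex.normSq_apply]
  linarith [im_sq_le_of_abs_im_le hz]

lemma norm_one_sub_sq_div_two_le_of_abs_im_le (hz : |z.im| ≤ |z.re| / 2) :
    ‖1 - z ^ 2 / 2‖ ≤ 1 - 3 / 8 * z.re ^ 2 + 25 / 128 * z.re ^ 4 := by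
  have hre : (-(z ^ 2 / 2)).re = -(z.re ^ 2 - z.im ^ 2) / 2 := by
    simp [pow_two]
    ring
  have hnorm : ‖-(z ^ 2 / 2)‖ ^ 2 = (‖z‖ ^ 2) ^ 2 / 4 := by
    rw [norm_neg, norm_div, norm_pow, Complex.norm_ofNat]
    ring
  have hpow : (‖z‖ ^ 2) ^ 2 ≤ (5 / 4 * z.re ^ 2) ^ 2 := by
    gcongr
    exact norm_sq_le_of_abs_im_le hz
  have h := norm_one_add_le_one_add_re_add_norm_sq_div_two (-(z ^ 2 / 2))
  rw [hre, hnorm, ← sub_eq_add_neg] at h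
  linarith [im_sq_le_of_abs_im_le hz]

lemma norm_pow_three_le_of_abs_im_le (hz : |z.im| ≤ |z.re| / 2) :
    ‖z‖ ^ 3 ≤ 7 / 5 * |z.re| ^ 3 := by
  have hsq := norm_sq_le_of_abs_im_le hz
  have hnorm : ‖z‖ ≤ 28 / 25 * |z.re| := by
    refine (sq_le_sq₀ (norm_nonneg z) (by positivity)).1 ?_
    rw [mul_pow, sq_abs]
    linarith [sq_nonneg z.re]
  calc ‖z‖ ^ 3 = ‖z‖ ^ 2 * ‖z‖ := by ring
    _ ≤ 5 / 4 * z.re ^ 2 * (28 / 25 * |z.re|) := by gcongr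
    _ = 7 / 5 * |z.re| ^ 3 := by rw [← sq_abs]; ring

end Complex

section Region

variable {α : ℝ} {z : ℂ}

lemma sq_le_sq_div_sixteen_of_abs_le {t : ℝ} (hα : α ^ 2 ≤ 2) (ht : |t| ≤ α ^ 3 / 8) :
    t ^ 2 ≤ α ^ 2 / 16 := by
  calc t ^ 2 = |t| ^ 2 := (sq_abs t).symm
    _ ≤ (α ^ 3 / 8) ^ 2 := by gcongr
    _ = α ^ 2 * (α ^ 2) ^ 2 / 64 := by ring
    _ ≤ α ^ 2 * 2 ^ 2 / 64 := by gcongr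
    _ = α ^ 2 / 16 := by ring

lemma norm_le_of_abs_re_le (hα₀ : 0 < α) (hα : α ^ 2 ≤ 2)
    (hre : |z.re| ≤ α ^ 3 / 8) (him : |z.im| ≤ |z.re| / 2) : ‖z‖ ≤ α := by
  refine (sq_le_sq₀ (norm_nonneg z) hα₀.le).1 ?_
  linarith [norm_sq_le_of_abs_im_le him, sq_le_sq_div_sixteen_of_abs_le hα hre, sq_nonneg α]

lemma norm_div_pow_three_le (hα : 0 < α) (hre : |z.re| ≤ α ^ 3 / 8)
    (him : |z.im| ≤ |z.re| / 2) : (‖z‖ / α) ^ 3 ≤ 7 / 40 * z.re ^ 2 := by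
  rw [div_pow, div_le_iff₀ (by positivity)]
  calc ‖z‖ ^ 3 ≤ 7 / 5 * |z.re| ^ 3 := norm_pow_three_le_of_abs_im_le him
    _ = 7 / 5 * (z.re ^ 2 * |z.re|) := by rw [← sq_abs]; ring
    _ ≤ 7 / 5 * (z.re ^ 2 * (α ^ 3 / 8)) := by gcongr
    _ = 7 / 40 * z.re ^ 2 * α ^ 3 := by ring

lemma norm_one_sub_sq_div_two_add_le_exp (hα₀ : 0 < α) (hα : α ^ 2 ≤ 2)
    (hre : |z.re| ≤ α ^ 3 / 8) (him : |z.im| ≤ |z.re| / 2) :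
    ‖1 - z ^ 2 / 2‖ + (‖z‖ / α) ^ 3 * (1 - α ^ 2 / 2) ≤ Real.exp (-z.re ^ 2 / 5) := by
  have hquartic : z.re ^ 2 * z.re ^ 2 ≤ z.re ^ 2 * (α ^ 2 / 16) := by
    gcongr
    exact sq_le_sq_div_sixteen_of_abs_le hα hre
  have hnonneg : 0 ≤ z.re ^ 2 * α ^ 2 := by positivity
  calc ‖1 - z ^ 2 / 2‖ + (‖z‖ / α) ^ 3 * (1 - α ^ 2 / 2)
      ≤ 1 - 3 / 8 * z.re ^ 2 + 25 / 128 * z.re ^ 4 +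
          7 / 40 * z.re ^ 2 * (1 - α ^ 2 / 2) := by
        gcongr
        · exact norm_one_sub_sq_div_two_le_of_abs_im_le him
        · linarith
        · exact norm_div_pow_three_le hα₀ hre him
    _ ≤ -z.re ^ 2 / 5 + 1 := by linarith
    _ ≤ Real.exp (-z.re ^ 2 / 5) := Real.add_one_le_exp _

end Region

lemma integrable_and_integral_le_of_lintegral_ofReal_le {Ω : Type*} {mΩ : MeasurableSpace Ω}
    {μ : Measure Ω} {g : Ω → ℝ} {c : ℝ} (hg : AEStronglyMeasurable g μ) (hg₀ : 0 ≤ᵐ[μ] g)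
    (hc : 0 ≤ c) (h : ∫⁻ ω, ENNReal.ofReal (g ω) ∂μ ≤ ENNReal.ofReal c) :
    Integrable g μ ∧ ∫ ω, g ω ∂μ ≤ c := by
  have hint : Integrable g μ :=
    (lintegral_ofReal_ne_top_iff_integrable hg hg₀).1 (h.trans_lt ENNReal.ofReal_lt_top).ne
  rw [← ofReal_integral_eq_lintegral_ofReal hint hg₀] at h
  exact ⟨hint, (ENNReal.ofReal_le_ofReal_iff hc).1 h⟩

theorem norm_complexMGF_I_mul_le_exp {Ω : Type*} {mΩ : MeasurableSpace Ω} {μ : Measure Ω}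
    [IsProbabilityMeasure μ] {X : Ω → ℝ} {α : ℝ} {z : ℂ} (hX : AEMeasurable X μ) (hα : 0 < α)
    (hmean : ∫ ω, X ω ∂μ = 0) (hvar : ∫ ω, X ω ^ 2 ∂μ = 1)
    (hint : Integrable (fun ω ↦ Real.exp (α * |X ω|)) μ)
    (hexp : ∫ ω, Real.exp (α * |X ω|) ∂μ ≤ 2)
    (hre : |z.re| ≤ α ^ 3 / 8) (him : |z.im| ≤ |z.re| / 2) :
    ‖complexMGF X μ (Complex.I * z)‖ ≤ Real.exp (-z.re ^ 2 / 5) := by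
  have hα₂ : α ^ 2 ≤ 2 := by
    linarith [one_add_sq_div_two_le_integral_exp_mul_abs hX hα hint hmean hvar]
  have hremainder : ∫ ω, Real.exp (α * |X ω|) ∂μ - (1 + α ^ 2 / 2) ≤ 1 - α ^ 2 / 2 := by
    linarith
  have hnorm : ‖Complex.I * z‖ = ‖z‖ := by rw [norm_mul, Complex.norm_I, one_mul]
  have hsq : 1 + (Complex.I * z) ^ 2 / 2 = 1 - z ^ 2 / 2 := by
    rw [mul_pow, Complex.I_sq]
    ring
  have htaylor := norm_complexMGF_sub_one_add_sq_div_two_le (w := Complex.I * z) hX hα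
    (hnorm.trans_le (norm_le_of_abs_re_le hα hα₂ hre him)) hint hmean hvar
  rw [hnorm, hsq] at htaylor
  calc ‖complexMGF X μ (Complex.I * z)‖
      ≤ ‖1 - z ^ 2 / 2‖ + ‖complexMGF X μ (Complex.I * z) - (1 - z ^ 2 / 2)‖ :=
        norm_le_norm_add_norm_sub' _ _
    _ ≤ ‖1 - z ^ 2 / 2‖ +
          (‖z‖ / α) ^ 3 * (∫ ω, Real.exp (α * |X ω|) ∂μ - (1 + α ^ 2 / 2)) := by gcongr
    _ ≤ ‖1 - z ^ 2 / 2‖ + (‖z‖ / α) ^ 3 * (1 - α ^ 2 / 2) := by gcongr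
    _ ≤ Real.exp (-z.re ^ 2 / 5) := norm_one_sub_sq_div_two_add_le_exp hα hα₂ hre him

/-- If `E X = 0`, `E X² = 1` and `E e^{α|X|} ≤ 2` (`α > 0`), then the characteristic function
`f(z) = E e^{izX}` satisfies `|f(z)| ≤ e^{−t²/5}` for all `z = t + iy` with `|t| ≤ α³/8` and
`|y| ≤ |t|/2`. -/
theorem stmt_8 {Ω : Type*} [MeasurableSpace Ω] {P : Measure Ω} [IsProbabilityMeasure P]
    (X : Ω → ℝ) (hmeas : Measurable X) (α : ℝ) (hα : 0 < α)
    (hmean : ∫ ω, X ω ∂P = 0) (hvar : ∫ ω, (X ω) ^ 2 ∂P = 1)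
    (hexp : ∫⁻ ω, ENNReal.ofReal (Real.exp (α * |X ω|)) ∂P ≤ 2)
    (f : ℂ → ℂ)
    (hf : ∀ z : ℂ, f z = ∫ ω, Complex.exp (Complex.I * z * X ω) ∂P) :
    ∀ t y : ℝ, |t| ≤ α ^ 3 / 8 → |y| ≤ |t| / 2 →
      ‖f (t + y * Complex.I)‖ ≤ Real.exp (-t ^ 2 / 5) := by
  intro t y ht hy
  obtain ⟨hint, hle⟩ := integrable_and_integral_le_of_lintegral_ofReal_le (μ := P)
    (g := fun ω ↦ Real.exp (α * |X ω|)) (c := 2) (by fun_prop)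
    (.of_forall fun _ ↦ (Real.exp_pos _).le) zero_le_two (by simpa using hexp)
  have hre : (t + y * Complex.I : ℂ).re = t := by simp
  have him : (t + y * Complex.I : ℂ).im = y := by simp
  have hbound := norm_complexMGF_I_mul_le_exp (z := t + y * Complex.I) hmeas.aemeasurable hα
    hmean hvar hint hle (by rwa [hre]) (by rwa [him, hre])
  rw [hre] at hbound
  rw [hf]
  exact hbound
end

section
/- Let X satisfy E X = 0, E X² = 1, E e^{α|X|} ≤ 2 (α > 0), and let K(z) = log E e^{zX}. Then for every complex τ with |τ| ≤ α³/32, the saddle-point equation K'(z) = τ has a unique solution z₀(τ) in the disc |z| ≤ α³/16; the map τ ↦ z₀(τ) is analytic and injective on |τ| ≤ α³/32, satisfies z₀(0) = 0, z₀'(0) = 1, and |z₀(τ)| ≤ 2|τ|. -/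
open MeasureTheory ProbabilityTheory

/-!
Near the origin the moment generating function `M(z) = E e^{zX}` is `1 + z²/2` up to a third-order
error. The third derivative of `M` is at most `4 / α³` on the disc `|z| < α³/12`, so integrating
from the origin shows that there `M''`, `M'` and `M` are close to `1`, `0` and `1`, whence
`K'' = M''/M - (M'/M)²` is within `1/2` of `1`. So `K'` is a perturbation of the identity with
Lipschitz constant `1/2`: it is injective, it covers the disc of half the radius, and its inverse is
analytic and expands distances by at most `2`. The radius `α³/12` leaves room for the closed discs
of the theorem, `α³/16 < α³/12` and `α³/32 < α³/24`.
-/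

section InverseFunction

open Metric
open scoped NNReal

variable {𝕜 : Type*} [RCLike 𝕜] {f : 𝕜 → 𝕜}

lemma approximatesLinearOn_refl_of_norm_deriv_sub_one_le {s : Set 𝕜} {c : ℝ≥0} (hs : Convex ℝ s)
    (hf : ∀ z ∈ s, DifferentiableAt 𝕜 f z) (hbound : ∀ z ∈ s, ‖deriv f z - 1‖ ≤ c) :
    ApproximatesLinearOn f (ContinuousLinearEquiv.refl 𝕜 𝕜 : 𝕜 →L[𝕜] 𝕜) s c := by
  refine LipschitzOnWith.approximatesLinearOn (lipschitzOnWith_iff_norm_sub_le.2 fun z hz w hw ↦ ?_)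
  have hderiv (x : 𝕜) (hx : x ∈ s) : HasDerivWithinAt (f - id) (deriv f x - 1) s x :=
    ((hf x hx).hasDerivAt.sub (hasDerivAt_id x)).hasDerivWithinAt
  exact hs.norm_image_sub_le_of_norm_hasDerivWithin_le hderiv hbound hw hz

lemma ne_zero_of_norm_sub_one_lt_one {z : 𝕜} (hz : ‖z - 1‖ < 1) : z ≠ 0 := by
  rintro rfl
  simp at hz

theorem exists_openPartialHomeomorph_of_norm_deriv_sub_one_le {a : 𝕜} {R : ℝ} {c : ℝ≥0}
    (hc : c < 1) (hf : AnalyticOnNhd 𝕜 f (ball a R))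
    (hbound : ∀ z ∈ ball a R, ‖deriv f z - 1‖ ≤ c) :
    ∃ e : OpenPartialHomeomorph 𝕜 𝕜, ⇑e = f ∧ e.source = ball a R ∧
      ball (f a) ((1 - c) * R) ⊆ e.target ∧ AnalyticOnNhd 𝕜 e.symm e.target ∧
      ∀ w ∈ e.target, (1 - c) * ‖e.symm w - a‖ ≤ ‖w - f a‖ := by
  have happrox := approximatesLinearOn_refl_of_norm_deriv_sub_one_le (convex_ball a R)
    (fun z hz ↦ (hf z hz).differentiableAt) hbound
  have hc' : (0 : ℝ) < 1 - c := sub_pos.2 (mod_cast hc)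
  have hN : ‖((ContinuousLinearEquiv.refl 𝕜 𝕜).symm : 𝕜 →L[𝕜] 𝕜)‖₊⁻¹ = 1 := by simp
  let e := happrox.toOpenPartialHomeomorph f _ (.inr (by rwa [hN])) isOpen_ball
  refine ⟨e, rfl, rfl, fun w hw ↦ ?_, fun w hw ↦ ?_, fun w hw ↦ ?_⟩
  · have hε : ‖w - f a‖ / (1 - c) < R := by
      rw [div_lt_iff₀' hc']
      exact mem_ball_iff_norm.1 hw
    refine happrox.closedBall_subset_target _ isOpen_ball (by positivity)
      (closedBall_subset_ball hε) ?_
    rw [hN, NNReal.coe_one, mul_div_cancel₀ _ hc'.ne']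
    exact mem_closedBall_iff_norm.2 le_rfl
  · have hmem : e.symm w ∈ ball a R := e.map_target hw
    have hne : deriv f (e.symm w) ≠ 0 :=
      ne_zero_of_norm_sub_one_lt_one ((hbound _ hmem).trans_lt (mod_cast hc))
    exact e.analyticAt_symm (i := ContinuousLinearEquiv.unitsEquivAut 𝕜 (Units.mk0 _ hne)) hw
      (hf _ hmem) (by ext; simp [e])
  · have hmem : e.symm w ∈ ball a R := e.map_target hw
    have ha : a ∈ ball a R := mem_ball_self (pos_of_mem_ball hmem)
    have hlin : ‖w - f a - (e.symm w - a)‖ ≤ c * ‖e.symm w - a‖ := by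
      have := happrox _ hmem _ ha
      rwa [show f (e.symm w) = w from e.right_inv hw] at this
    linarith [norm_sub_norm_le (e.symm w - a) (w - f a), norm_sub_rev (w - f a) (e.symm w - a)]

theorem exists_analyticOnNhd_inverse_of_norm_deriv_sub_one_le {a : 𝕜} {R : ℝ} {c : ℝ≥0}
    (hR : 0 < R) (hc : c < 1) (hf : AnalyticOnNhd 𝕜 f (ball a R))
    (hbound : ∀ z ∈ ball a R, ‖deriv f z - 1‖ ≤ c) :
    ∃ g : 𝕜 → 𝕜, AnalyticOnNhd 𝕜 g (ball (f a) ((1 - c) * R)) ∧ g (f a) = a ∧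
      deriv g (f a) = (deriv f a)⁻¹ ∧
      ∀ w ∈ ball (f a) ((1 - c) * R), g w ∈ ball a R ∧ f (g w) = w ∧
        (1 - c) * ‖g w - a‖ ≤ ‖w - f a‖ ∧ ∀ z ∈ ball a R, f z = w → z = g w := by
  obtain ⟨e, rfl, hsource, htarget, hsymm, hexpand⟩ :=
    exists_openPartialHomeomorph_of_norm_deriv_sub_one_le hc hf hbound
  rw [← hsource] at hf ⊢
  have ha : a ∈ e.source := hsource ▸ mem_ball_self hR
  have hinv : ∀ z ∈ e.source, e.symm (e z) = z := fun z hz ↦ e.left_inv hz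
  refine ⟨e.symm, hsymm.mono htarget, hinv a ha, ?_, fun w hw ↦ ⟨e.map_target (htarget hw),
    e.right_inv (htarget hw), hexpand w (htarget hw), fun z hz hzw ↦ by rw [← hzw, hinv z hz]⟩⟩
  refine (e.hasDerivAt_symm (e.map_source ha) ?_ ?_).deriv
  · exact ne_zero_of_norm_sub_one_lt_one ((hbound a (mem_ball_self hR)).trans_lt (mod_cast hc))
  · rw [hinv a ha]
    exact (hf a ha).differentiableAt.hasDerivAt

end InverseFunction

section LogDerivatives

variable {f : ℂ → ℂ} {z : ℂ}

lemma deriv_deriv_log_comp (hf : AnalyticAt ℂ f z) (hz : f z ∈ Complex.slitPlane) :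
    deriv (deriv (Complex.log ∘ f)) z
      = iteratedDeriv 2 f z / f z - (deriv f z / f z) ^ 2 := by
  have hlog : deriv (Complex.log ∘ f) =ᶠ[nhds z] fun w ↦ deriv f w / f w := by
    filter_upwards [hf.eventually_analyticAt,
      hf.continuousAt.eventually_mem (Complex.isOpen_slitPlane.mem_nhds hz)] with w hw hfw
    exact Complex.deriv_log_comp_eq_logDeriv hw.differentiableAt hfw
  have hne : f z ≠ 0 := Complex.slitPlane_ne_zero hz
  rw [hlog.deriv_eq, deriv_fun_div hf.deriv.differentiableAt hf.differentiableAt hne,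
    iteratedDeriv_succ, iteratedDeriv_one]
  field_simp

lemma mem_slitPlane_of_norm_sub_one_lt_one (hz : ‖z - 1‖ < 1) : z ∈ Complex.slitPlane := by
  simpa using Complex.mem_slitPlane_of_norm_lt_one hz

lemma norm_deriv_deriv_log_comp_sub_one_le {ε δ η : ℝ} (hf : AnalyticAt ℂ f z) (hε : ε < 1)
    (h₀ : ‖f z - 1‖ ≤ ε) (h₁ : ‖deriv f z‖ ≤ δ) (h₂ : ‖iteratedDeriv 2 f z - 1‖ ≤ η) :
    ‖deriv (deriv (Complex.log ∘ f)) z - 1‖ ≤ (η + ε) / (1 - ε) + (δ / (1 - ε)) ^ 2 := by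
  have hslit : f z ∈ Complex.slitPlane := mem_slitPlane_of_norm_sub_one_lt_one (h₀.trans_lt hε)
  have hne : f z ≠ 0 := Complex.slitPlane_ne_zero hslit
  have hlower : 1 - ε ≤ ‖f z‖ := by
    have := norm_sub_norm_le 1 (f z)
    rw [norm_one, norm_sub_rev] at this
    linarith
  have hδ : 0 ≤ δ := (norm_nonneg _).trans h₁
  have hdecomp : deriv (deriv (Complex.log ∘ f)) z - 1
      = (iteratedDeriv 2 f z - 1 - (f z - 1)) / f z - (deriv f z / f z) ^ 2 := by
    rw [deriv_deriv_log_comp hf hslit]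
    field_simp
    ring
  calc ‖deriv (deriv (Complex.log ∘ f)) z - 1‖
      ≤ ‖iteratedDeriv 2 f z - 1 - (f z - 1)‖ / ‖f z‖ + (‖deriv f z‖ / ‖f z‖) ^ 2 := by
        rw [hdecomp, ← norm_div, ← norm_div, ← norm_pow]
        exact norm_sub_le _ _
    _ ≤ (η + ε) / (1 - ε) + (δ / (1 - ε)) ^ 2 := by
        have hnum : ‖iteratedDeriv 2 f z - 1 - (f z - 1)‖ ≤ η + ε :=
          (norm_sub_le _ _).trans (add_le_add h₂ h₀)
        have hnum_nonneg : 0 ≤ η + ε := (norm_nonneg _).trans hnum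
        have := sub_pos.2 hε
        gcongr

end LogDerivatives

section Taylor

open Metric

lemma norm_iteratedDeriv_sub_le {𝕜 E : Type*} [RCLike 𝕜] [NormedAddCommGroup E] [NormedSpace 𝕜 E]
    [CompleteSpace E] {f : 𝕜 → E} {s : Set 𝕜} {C : ℝ} {n : ℕ} {a z : 𝕜} (hs : Convex ℝ s)
    (hf : AnalyticOnNhd 𝕜 f s) (hbound : ∀ w ∈ s, ‖iteratedDeriv (n + 1) f w‖ ≤ C)
    (ha : a ∈ s) (hz : z ∈ s) :
    ‖iteratedDeriv n f z - iteratedDeriv n f a‖ ≤ C * ‖z - a‖ := by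
  refine hs.norm_image_sub_le_of_norm_deriv_le (𝕜 := 𝕜) (fun w hw ↦ ?_) (fun w hw ↦ ?_) ha hz
  · rw [iteratedDeriv_eq_iterate]
    exact (hf.iterated_deriv n w hw).differentiableAt
  · rw [← iteratedDeriv_succ]
    exact hbound w hw

lemma norm_jet_sub_le_of_norm_iteratedDeriv_three_le {𝕜 : Type*} [RCLike 𝕜] {f : 𝕜 → 𝕜}
    {a z : 𝕜} {R B : ℝ} (hf : AnalyticOnNhd 𝕜 f (ball a R)) (h₀ : f a = 1) (h₁ : deriv f a = 0)
    (h₂ : iteratedDeriv 2 f a = 1) (hbound : ∀ w ∈ ball a R, ‖iteratedDeriv 3 f w‖ ≤ B)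
    (hz : z ∈ ball a R) :
    ‖f z - 1‖ ≤ (1 + B * R) * R * R ∧ ‖deriv f z‖ ≤ (1 + B * R) * R ∧
      ‖iteratedDeriv 2 f z - 1‖ ≤ B * R := by
  have ha : a ∈ ball a R := mem_ball_self (pos_of_mem_ball hz)
  have integrate {n : ℕ} {C : ℝ} (hC : ∀ w ∈ ball a R, ‖iteratedDeriv (n + 1) f w‖ ≤ C) :
      ∀ w ∈ ball a R, ‖iteratedDeriv n f w - iteratedDeriv n f a‖ ≤ C * R := fun w hw ↦
    (norm_iteratedDeriv_sub_le (convex_ball a R) hf hC ha hw).trans <|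
      mul_le_mul_of_nonneg_left (mem_ball_iff_norm.1 hw).le ((norm_nonneg _).trans (hC a ha))
  have hsecond : ∀ w ∈ ball a R, ‖iteratedDeriv 2 f w - 1‖ ≤ B * R := by
    simpa only [h₂] using integrate hbound
  have hfirst : ∀ w ∈ ball a R, ‖iteratedDeriv 1 f w‖ ≤ (1 + B * R) * R := by
    have hnorm (w : 𝕜) (hw : w ∈ ball a R) : ‖iteratedDeriv 2 f w‖ ≤ 1 + B * R := by
      have := norm_le_norm_add_norm_sub' (iteratedDeriv 2 f w) 1
      rw [norm_one] at this
      linarith [hsecond w hw]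
    simpa only [iteratedDeriv_one, h₁, sub_zero] using integrate hnorm
  have hzeroth := integrate hfirst z hz
  rw [iteratedDeriv_zero, h₀] at hzeroth
  exact ⟨hzeroth, by simpa only [iteratedDeriv_one] using hfirst z hz, hsecond z hz⟩

end Taylor

section RealInequalities

lemma one_add_sq_le_exp_of_nonneg {x : ℝ} (hx : 0 ≤ x) : 1 + x ^ 2 ≤ Real.exp x := by
  have htaylor : 1 + x + x ^ 2 / 2 + x ^ 3 / 6 ≤ Real.exp x := by
    simpa [Finset.sum_range_succ, Nat.factorial] using Real.sum_le_exp_of_nonneg hx 4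
  nlinarith [mul_nonneg hx (sq_nonneg (x - 3 / 2))]

lemma pow_le_div_exp_one_pow_mul_exp {x c : ℝ} (hx : 0 ≤ x) (hc : 0 < c) (n : ℕ) :
    x ^ n ≤ (n / (c * Real.exp 1)) ^ n * Real.exp (c * x) := by
  rcases n.eq_zero_or_pos with rfl | hn
  · simpa using mul_nonneg hc.le hx
  have hn' : (0 : ℝ) < n := mod_cast hn
  have hlin : x ≤ n / (c * Real.exp 1) * Real.exp (c * x / n) := by
    calc x = n / (c * Real.exp 1) * (Real.exp 1 * (c * x / n)) := by field_simp
      _ ≤ n / (c * Real.exp 1) * Real.exp (c * x / n) := by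
        gcongr
        exact Real.exp_one_mul_le_exp
  calc x ^ n ≤ (n / (c * Real.exp 1) * Real.exp (c * x / n)) ^ n := by gcongr
    _ = (n / (c * Real.exp 1)) ^ n * Real.exp (c * x) := by
      rw [mul_pow, ← Real.exp_nat_mul, mul_div_cancel₀ _ hn'.ne']

end RealInequalities

section ExponentialMoments

variable {Ω : Type*} [MeasurableSpace Ω] {μ : Measure Ω} {X : Ω → ℝ} {a : ℝ}

lemma integrable_and_integral_le_of_lintegral_ofReal_le_s13 {f : Ω → ℝ} {C : NNReal}
    (hf : AEStronglyMeasurable f μ) (hpos : 0 ≤ᵐ[μ] f)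
    (hle : ∫⁻ ω, ENNReal.ofReal (f ω) ∂μ ≤ C) : Integrable f μ ∧ ∫ ω, f ω ∂μ ≤ C := by
  have hint : Integrable f μ :=
    (lintegral_ofReal_ne_top_iff_integrable hf hpos).1 (hle.trans_lt ENNReal.coe_lt_top).ne
  rw [← ofReal_integral_eq_lintegral_ofReal hint hpos] at hle
  exact ⟨hint, Real.toNNReal_le_iff_le_coe.1 (ENNReal.coe_le_coe.1 hle)⟩

lemma Ioo_subset_interior_integrableExpSet (hX : AEMeasurable X μ)
    (hexp : Integrable (fun ω ↦ Real.exp (a * |X ω|)) μ) :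
    Set.Ioo (-a) a ⊆ interior (integrableExpSet X μ) := by
  refine interior_maximal (fun t ht ↦ ?_) isOpen_Ioo
  refine hexp.mono' (by fun_prop) (.of_forall fun ω ↦ ?_)
  rw [Real.norm_eq_abs, Real.abs_exp, Real.exp_le_exp]
  calc t * X ω ≤ |t| * |X ω| := (le_abs_self _).trans_eq (abs_mul _ _)
    _ ≤ a * |X ω| := by gcongr; exact (abs_lt.2 ht).le

lemma one_add_sq_mul_integral_sq_le_integral_exp [IsProbabilityMeasure μ] (ha : 0 ≤ a)
    (hsq : Integrable (fun ω ↦ X ω ^ 2) μ)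
    (hexp : Integrable (fun ω ↦ Real.exp (a * |X ω|)) μ) :
    1 + a ^ 2 * ∫ ω, X ω ^ 2 ∂μ ≤ ∫ ω, Real.exp (a * |X ω|) ∂μ := by
  calc 1 + a ^ 2 * ∫ ω, X ω ^ 2 ∂μ = ∫ ω, (1 + a ^ 2 * X ω ^ 2) ∂μ := by
        rw [integral_add (integrable_const _) (hsq.const_mul _), integral_const_mul]
        simp
    _ ≤ ∫ ω, Real.exp (a * |X ω|) ∂μ := by
        refine integral_mono ((integrable_const _).add (hsq.const_mul _)) hexp fun ω ↦ ?_
        simpa [mul_pow] using one_add_sq_le_exp_of_nonneg (x := a * |X ω|) (by positivity)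

lemma analyticOnNhd_complexMGF_ball (hX : AEMeasurable X μ)
    (hexp : Integrable (fun ω ↦ Real.exp (a * |X ω|)) μ) :
    AnalyticOnNhd ℂ (complexMGF X μ) (Metric.ball 0 a) := fun z hz ↦
  analyticAt_complexMGF <| Ioo_subset_interior_integrableExpSet hX hexp <|
    abs_lt.1 ((Complex.abs_re_le_norm z).trans_lt (mem_ball_zero_iff.1 hz))

lemma iteratedDeriv_complexMGF_zero (h : 0 ∈ interior (integrableExpSet X μ)) (n : ℕ) :
    iteratedDeriv n (complexMGF X μ) 0 = (∫ ω, X ω ^ n ∂μ : ℝ) := by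
  rw [iteratedDeriv_complexMGF (by simpa using h), ← integral_complex_ofReal]
  simp

lemma norm_iteratedDeriv_complexMGF_le {z : ℂ} (hX : AEMeasurable X μ)
    (hexp : Integrable (fun ω ↦ Real.exp (a * |X ω|)) μ) (hz : |z.re| < a) (n : ℕ) :
    ‖iteratedDeriv n (complexMGF X μ) z‖
      ≤ (n / ((a - |z.re|) * Real.exp 1)) ^ n * ∫ ω, Real.exp (a * |X ω|) ∂μ := by
  rw [iteratedDeriv_complexMGF (Ioo_subset_interior_integrableExpSet hX hexp (abs_lt.1 hz)),
    ← integral_const_mul]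
  refine norm_integral_le_of_norm_le (hexp.const_mul _) (.of_forall fun ω ↦ ?_)
  set A := (n / ((a - |z.re|) * Real.exp 1)) ^ n
  calc ‖(X ω : ℂ) ^ n * Complex.exp (z * X ω)‖ = |X ω| ^ n * Real.exp (z.re * X ω) := by
        simp [Complex.norm_exp]
    _ ≤ A * Real.exp ((a - |z.re|) * |X ω|) * Real.exp (|z.re| * |X ω|) := by
        have hre : z.re * X ω ≤ |z.re| * |X ω| := (le_abs_self _).trans_eq (abs_mul _ _)
        exact mul_le_mul (pow_le_div_exp_one_pow_mul_exp (abs_nonneg _) (sub_pos.2 hz) n)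
          (Real.exp_le_exp.2 hre) (Real.exp_pos _).le (by positivity)
    _ = A * Real.exp (a * |X ω|) := by
        rw [mul_assoc, ← Real.exp_add, ← add_mul, sub_add_cancel]

lemma deriv_log_comp_complexMGF_zero [IsProbabilityMeasure μ]
    (h : 0 ∈ interior (integrableExpSet X μ)) :
    deriv (Complex.log ∘ complexMGF X μ) 0 = (∫ ω, X ω ∂μ : ℝ) := by
  have hM₀ : complexMGF X μ 0 = 1 := by simp [complexMGF]
  have hM₁ := iteratedDeriv_complexMGF_zero h 1
  rw [Complex.deriv_log_comp_eq_logDeriv (analyticAt_complexMGF (by simpa using h)).differentiableAt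
    (by simp [hM₀]), logDeriv_apply, hM₀, div_one, ← iteratedDeriv_one, hM₁]
  simp only [pow_one]

lemma deriv_deriv_log_comp_complexMGF_zero [IsProbabilityMeasure μ]
    (h : 0 ∈ interior (integrableExpSet X μ)) :
    deriv (deriv (Complex.log ∘ complexMGF X μ)) 0
      = (∫ ω, X ω ^ 2 ∂μ - (∫ ω, X ω ∂μ) ^ 2 : ℝ) := by
  have hM₀ : complexMGF X μ 0 = 1 := by simp [complexMGF]
  have hM₁ := iteratedDeriv_complexMGF_zero h 1
  rw [deriv_deriv_log_comp (analyticAt_complexMGF (by simpa using h)) (by simp [hM₀]), hM₀,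
    iteratedDeriv_complexMGF_zero h, ← iteratedDeriv_one, hM₁]
  simp only [pow_one, div_one, Complex.ofReal_sub, Complex.ofReal_pow]

end ExponentialMoments

section SaddlePoint

open Metric

variable {Ω : Type*} [MeasurableSpace Ω] {P : Measure Ω} {X : Ω → ℝ} {α : ℝ}

lemma le_one_of_integral_exp_le_two [IsProbabilityMeasure P] (hα : 0 ≤ α)
    (hsq : Integrable (fun ω ↦ X ω ^ 2) P) (hvar : ∫ ω, X ω ^ 2 ∂P = 1)
    (hint : Integrable (fun ω ↦ Real.exp (α * |X ω|)) P)
    (hexp : ∫ ω, Real.exp (α * |X ω|) ∂P ≤ 2) : α ≤ 1 := by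
  have h := one_add_sq_mul_integral_sq_le_integral_exp hα hsq hint
  rw [hvar] at h
  nlinarith

lemma norm_iteratedDeriv_three_complexMGF_le {z : ℂ} (hX : AEMeasurable X P) (hα : 0 < α)
    (hint : Integrable (fun ω ↦ Real.exp (α * |X ω|)) P)
    (hexp : ∫ ω, Real.exp (α * |X ω|) ∂P ≤ 2) (hz : ‖z‖ ≤ α / 12) :
    ‖iteratedDeriv 3 (complexMGF X P) z‖ ≤ 4 / α ^ 3 := by
  have hre : |z.re| ≤ α / 12 := (Complex.abs_re_le_norm z).trans hz
  -- `2.4` is a lower bound for `(11 / 12) * e`.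
  have hrate : 2.4 * α ≤ (α - |z.re|) * Real.exp 1 := by
    nlinarith [Real.exp_one_gt_d9]
  calc ‖iteratedDeriv 3 (complexMGF X P) z‖
      ≤ (3 / ((α - |z.re|) * Real.exp 1)) ^ 3 * ∫ ω, Real.exp (α * |X ω|) ∂P :=
        mod_cast norm_iteratedDeriv_complexMGF_le hX hint (by linarith) 3
    _ ≤ (3 / (2.4 * α)) ^ 3 * 2 := by
        have : 0 < (α - |z.re|) * Real.exp 1 := hrate.trans_lt' (by positivity)
        gcongr
    _ ≤ 4 / α ^ 3 := by
        rw [div_pow, mul_pow, ← div_div, div_mul_eq_mul_div]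
        gcongr
        norm_num

lemma norm_jet_complexMGF_sub_le [IsProbabilityMeasure P] (hX : AEMeasurable X P)
    (hα : 0 < α) (hmean : ∫ ω, X ω ∂P = 0) (hvar : ∫ ω, X ω ^ 2 ∂P = 1)
    (hint : Integrable (fun ω ↦ Real.exp (α * |X ω|)) P)
    (hexp : ∫ ω, Real.exp (α * |X ω|) ∂P ≤ 2) {z : ℂ} (hz : z ∈ ball 0 (α ^ 3 / 12)) :
    AnalyticAt ℂ (complexMGF X P) z ∧ ‖complexMGF X P z - 1‖ ≤ 1 / 108 ∧
      ‖deriv (complexMGF X P) z‖ ≤ 1 / 9 ∧ ‖iteratedDeriv 2 (complexMGF X P) z - 1‖ ≤ 1 / 3 := by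
  have h0 : 0 ∈ interior (integrableExpSet X P) :=
    Ioo_subset_interior_integrableExpSet hX hint ⟨neg_lt_zero.2 hα, hα⟩
  have hα1 : α ≤ 1 := le_one_of_integral_exp_le_two hα.le
    (integrable_pow_of_mem_interior_integrableExpSet h0 2) hvar hint hexp
  have hα3 : α ^ 3 ≤ α := pow_le_of_le_one hα.le hα1 three_ne_zero
  have hana : AnalyticOnNhd ℂ (complexMGF X P) (ball 0 (α ^ 3 / 12)) :=
    (analyticOnNhd_complexMGF_ball hX hint).mono (ball_subset_ball (by linarith))
  have hM := iteratedDeriv_complexMGF_zero h0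
  have hjet := norm_jet_sub_le_of_norm_iteratedDeriv_three_le hana (by simp [complexMGF])
    (by simpa [hmean] using hM 1) (by simpa [hvar] using hM 2)
    (fun w hw ↦ norm_iteratedDeriv_three_complexMGF_le hX hα hint hexp <| by
      linarith [mem_ball_zero_iff.1 hw]) hz
  have hBR : 4 / α ^ 3 * (α ^ 3 / 12) = 1 / 3 := by field_simp; norm_num
  rw [hBR] at hjet
  obtain ⟨hzeroth, hfirst, hsecond⟩ := hjet
  have hα3' : 0 < α ^ 3 := by positivity
  exact ⟨hana z hz, by nlinarith, by linarith, hsecond⟩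

lemma analyticAt_log_comp_complexMGF_and_norm_deriv_deriv_sub_one_le [IsProbabilityMeasure P]
    (hX : AEMeasurable X P) (hα : 0 < α) (hmean : ∫ ω, X ω ∂P = 0) (hvar : ∫ ω, X ω ^ 2 ∂P = 1)
    (hint : Integrable (fun ω ↦ Real.exp (α * |X ω|)) P)
    (hexp : ∫ ω, Real.exp (α * |X ω|) ∂P ≤ 2) {z : ℂ} (hz : z ∈ ball 0 (α ^ 3 / 12)) :
    AnalyticAt ℂ (Complex.log ∘ complexMGF X P) z ∧
      ‖deriv (deriv (Complex.log ∘ complexMGF X P)) z - 1‖ ≤ 1 / 2 := by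
  obtain ⟨hM, hM₀, hM₁, hM₂⟩ := norm_jet_complexMGF_sub_le hX hα hmean hvar hint hexp hz
  refine ⟨hM.clog (mem_slitPlane_of_norm_sub_one_lt_one (hM₀.trans_lt (by norm_num))), ?_⟩
  refine (norm_deriv_deriv_log_comp_sub_one_le hM (by norm_num) hM₀ hM₁ hM₂).trans ?_
  norm_num

theorem exists_analyticOnNhd_saddlePoint [IsProbabilityMeasure P]
    (hX : AEMeasurable X P) (hα : 0 < α) (hmean : ∫ ω, X ω ∂P = 0) (hvar : ∫ ω, X ω ^ 2 ∂P = 1)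
    (hint : Integrable (fun ω ↦ Real.exp (α * |X ω|)) P)
    (hexp : ∫ ω, Real.exp (α * |X ω|) ∂P ≤ 2) :
    ∃ z₀ : ℂ → ℂ, AnalyticOnNhd ℂ z₀ (ball 0 (α ^ 3 / 24)) ∧ z₀ 0 = 0 ∧ deriv z₀ 0 = 1 ∧
      ∀ τ ∈ ball 0 (α ^ 3 / 24), deriv (Complex.log ∘ complexMGF X P) (z₀ τ) = τ ∧
        ‖z₀ τ‖ ≤ 2 * ‖τ‖ ∧ ∀ z ∈ ball 0 (α ^ 3 / 12),
          deriv (Complex.log ∘ complexMGF X P) z = τ → z = z₀ τ := by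
  have h0 : 0 ∈ interior (integrableExpSet X P) :=
    Ioo_subset_interior_integrableExpSet hX hint ⟨neg_lt_zero.2 hα, hα⟩
  have hK₁ : deriv (Complex.log ∘ complexMGF X P) 0 = 0 := by
    rw [deriv_log_comp_complexMGF_zero h0, hmean, Complex.ofReal_zero]
  have hK₂ : deriv (deriv (Complex.log ∘ complexMGF X P)) 0 = 1 := by
    simp [deriv_deriv_log_comp_complexMGF_zero h0, hmean, hvar]
  have hlog {z : ℂ} (hz : z ∈ ball 0 (α ^ 3 / 12)) :=
    analyticAt_log_comp_complexMGF_and_norm_deriv_deriv_sub_one_le hX hα hmean hvar hint hexp hz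
  obtain ⟨z₀, hana, hz₀, hderiv, hsol⟩ :=
    exists_analyticOnNhd_inverse_of_norm_deriv_sub_one_le (c := 1 / 2) (by positivity)
      (by norm_num) (fun z hz ↦ (hlog hz).1.deriv) (fun z hz ↦ by simpa using (hlog hz).2)
  have hradius : (1 - ((1 / 2 : NNReal) : ℝ)) * (α ^ 3 / 12) = α ^ 3 / 24 := by
    push_cast
    ring
  rw [hK₁, hradius] at hana hsol
  rw [hK₁] at hz₀
  rw [hK₁, hK₂, inv_one] at hderiv
  refine ⟨z₀, hana, hz₀, hderiv, fun τ hτ ↦ ?_⟩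
  obtain ⟨-, hright, hexpand, hunique⟩ := hsol τ hτ
  have hhalf : (1 - 2⁻¹) * ‖z₀ τ‖ ≤ ‖τ‖ := by simpa using hexpand
  exact ⟨hright, by linarith, hunique⟩

end SaddlePoint

/-- Saddle point: if `E X = 0`, `E X² = 1`, `E e^{α|X|} ≤ 2`, and `K(z) = log E e^{zX}`,
then there is a map `z₀`, analytic and injective on the disc `|τ| ≤ α³/32`, with
`z₀ 0 = 0`, `z₀' 0 = 1`, such that for each `|τ| ≤ α³/32` the point `z₀ τ` is the unique
solution of `K'(z) = τ` in the disc `|z| ≤ α³/16`, and `|z₀ τ| ≤ 2|τ|`. -/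
theorem stmt_13 {Ω : Type*} [MeasurableSpace Ω] {P : Measure Ω} [IsProbabilityMeasure P]
    (X : Ω → ℝ) (hmeas : Measurable X) (α : ℝ) (hα : 0 < α)
    (hmean : ∫ ω, X ω ∂P = 0) (hvar : ∫ ω, (X ω) ^ 2 ∂P = 1)
    (hexp : ∫⁻ ω, ENNReal.ofReal (Real.exp (α * |X ω|)) ∂P ≤ 2)
    (K : ℂ → ℂ)
    (hK : ∀ z : ℂ, K z = Complex.log (∫ ω, Complex.exp (z * X ω) ∂P)) :
    ∃ z₀ : ℂ → ℂ,
      AnalyticOnNhd ℂ z₀ {τ : ℂ | ‖τ‖ ≤ α ^ 3 / 32} ∧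
      Set.InjOn z₀ {τ : ℂ | ‖τ‖ ≤ α ^ 3 / 32} ∧
      z₀ 0 = 0 ∧ deriv z₀ 0 = 1 ∧
      ∀ τ : ℂ, ‖τ‖ ≤ α ^ 3 / 32 →
        ‖z₀ τ‖ ≤ α ^ 3 / 16 ∧ deriv K (z₀ τ) = τ ∧ ‖z₀ τ‖ ≤ 2 * ‖τ‖ ∧
        (∀ z : ℂ, ‖z‖ ≤ α ^ 3 / 16 → deriv K z = τ → z = z₀ τ) := by
  obtain rfl : K = Complex.log ∘ complexMGF X P := funext hK
  obtain ⟨hint, hexp'⟩ := integrable_and_integral_le_of_lintegral_ofReal_le_s13 (C := 2)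
    (by fun_prop) (.of_forall fun _ ↦ (Real.exp_pos _).le) hexp
  obtain ⟨z₀, hana, hz₀, hderiv, hsol⟩ :=
    exists_analyticOnNhd_saddlePoint hmeas.aemeasurable hα hmean hvar hint hexp'
  have hα3 : 0 < α ^ 3 := by positivity
  have hmem {τ : ℂ} (hτ : ‖τ‖ ≤ α ^ 3 / 32) : τ ∈ Metric.ball 0 (α ^ 3 / 24) :=
    mem_ball_zero_iff.2 (by linarith)
  refine ⟨z₀, hana.mono fun τ hτ ↦ hmem hτ, fun τ hτ τ' hτ' h ↦ ?_, hz₀, hderiv, fun τ hτ ↦ ?_⟩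
  · rw [← (hsol τ (hmem hτ)).1, h, (hsol τ' (hmem hτ')).1]
  · obtain ⟨hright, hbound, hunique⟩ := hsol τ (hmem hτ)
    exact ⟨by linarith, hright, hbound, fun z hz ↦ hunique z (mem_ball_zero_iff.2 (by linarith))⟩
end
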